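/- arXiv:2604.24565 — 2 statements merged into one kernel-verified Lean document; each statement's English description precedes it below -/
import Mathlib

section
/- Let G be a finite group, p a prime, P a Sylow p-subgroup of G, and x ∈ P. If y ∈ Sub_G(x) is conjugate to x in G, then x and y are conjugate in Sub_G(x). -/
/-- A subgroup `H` is subnormal in a subgroup `K` (of an ambient group `G`) if there is a chain
of subgroups `H = H_0 ≤ H_1 ≤ ⋯ ≤ H_t = K` with `H_i` normal in `H_{i+1}` for all `i`. -/
def IsSubnormalIn {G : Type*} [Group G] (H K : Subgroup G) : Prop :=
  ∃ (t : ℕ) (c : Fin (t + 1) → Subgroup G), c 0 = H ∧ c (Fin.last t) = K ∧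
    ∀ i : Fin t, c i.castSucc ≤ c i.succ ∧ ((c i.castSucc).subgroupOf (c i.succ)).Normal

/-- Casolo's subnormalizer set `S_G(x) = {g ∈ G : ⟨x⟩ is subnormal in ⟨x, g⟩}`. -/
def subnormalizerSet {G : Type*} [Group G] (x : G) : Set G :=
  {g | IsSubnormalIn (Subgroup.zpowers x) (Subgroup.closure {x, g})}

/-- The subnormalizer subgroup `Sub_G(x) = ⟨S_G(x)⟩`. -/
def subnormalizerSubgroup {G : Type*} [Group G] (x : G) : Subgroup G :=
  Subgroup.closure (subnormalizerSet x)

theorem subn_refl {G : Type*} [Group G] (H : Subgroup G) : IsSubnormalIn H H :=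
  ⟨0, fun _ => H, rfl, rfl, fun i => i.elim0⟩

theorem subn_cons {G : Type*} [Group G] {H H' K : Subgroup G} (hle : H ≤ H')
    (hn : (H.subgroupOf H').Normal) (h : IsSubnormalIn H' K) : IsSubnormalIn H K := by
  obtain ⟨t, c, h0, hl, hc⟩ := h
  refine ⟨t + 1, Fin.cons H c, by simp, ?_, ?_⟩
  · rw [← Fin.succ_last, Fin.cons_succ, hl]
  · intro i
    refine Fin.cases ?_ (fun j => ?_) i
    · rw [Fin.castSucc_zero, Fin.cons_zero, Fin.cons_succ, h0]
      exact ⟨hle, hn⟩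
    · rw [Fin.castSucc_succ, Fin.cons_succ, Fin.cons_succ]
      exact hc j

theorem subn_map {G : Type*} [Group G] {H K : Subgroup G} (f : G →* G)
    (h : IsSubnormalIn H K) : IsSubnormalIn (H.map f) (K.map f) := by
  obtain ⟨t, c, h0, hl, hc⟩ := h
  refine ⟨t, fun i => (c i).map f, by simp [h0], by simp [hl], fun i => ?_⟩
  have hle := (hc i).1
  have hle' : (c i.castSucc).map f ≤ (c i.succ).map f := Subgroup.map_mono hle
  refine ⟨hle', ?_⟩
  rw [Subgroup.normal_subgroupOf_iff hle']
  have hn := (Subgroup.normal_subgroupOf_iff hle).1 (hc i).2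
  rintro _ _ ⟨a, ha, rfl⟩ ⟨b, hb, rfl⟩
  exact ⟨b * a * b⁻¹, hn a b ha hb, by simp⟩

/-- A subgroup of a `p`-subgroup `R` normal in `N` is subnormal in `N`. -/
theorem subn_of_pgroup {G : Type*} [Group G] [Finite G] {p : ℕ} (hp : p.Prime)
    (R N : Subgroup G) (hR : IsPGroup p R) (hRN : R ≤ N) (hn : (R.subgroupOf N).Normal)
    (H : Subgroup G) (hH : H ≤ R) : IsSubnormalIn H N := by
  have : Fact p.Prime := ⟨hp⟩
  induction H using WellFoundedGT.induction with
  | ind H ih =>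
  rcases eq_or_lt_of_le hH with rfl | hlt
  · exact subn_cons hRN hn (subn_refl N)
  · have hnil : Group.IsNilpotent R := hR.isNilpotent
    have hc := Group.normalizerCondition_of_isNilpotent (G := R) (H.subgroupOf R) (by
      rw [lt_top_iff_ne_top, Ne, Subgroup.subgroupOf_eq_top]
      exact not_le_of_gt hlt)
    obtain ⟨_, a, ha, hna⟩ := SetLike.lt_iff_le_and_exists.1 hc
    let H' : Subgroup G := (Subgroup.normalizer (H.subgroupOf R : Set R)).map R.subtype
    have hHH' : H ≤ H' := fun z hz =>
      ⟨⟨z, hH hz⟩, hc.le (by simpa [Subgroup.mem_subgroupOf] using hz), rfl⟩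
    have hH'R : H' ≤ R := by
      rintro _ ⟨b, _, rfl⟩
      exact b.2
    refine subn_cons hHH' ?_ (ih H' ?_ hH'R)
    · rw [Subgroup.normal_subgroupOf_iff hHH']
      rintro h _ hh ⟨b, hb, rfl⟩
      have := (Subgroup.mem_normalizer_iff.1 hb ⟨h, hH hh⟩).1
        (by simpa [Subgroup.mem_subgroupOf] using hh)
      simpa [Subgroup.mem_subgroupOf] using this
    · refine lt_of_le_of_ne hHH' fun he => hna ?_
      have : (a : G) ∈ H' := ⟨a, ha, rfl⟩
      rw [← he] at this
      simpa [Subgroup.mem_subgroupOf] using this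

/-- If `x` lies in a `p`-subgroup `Q` normalized by `g` then `g ∈ Sub_G(x)`. -/
theorem mem_sub_of_normalizes {G : Type*} [Group G] [Finite G] {p : ℕ} (hp : p.Prime)
    (Q : Subgroup G) (hQ : IsPGroup p Q) (x : G) (hx : x ∈ Q) (g : G)
    (hg : ∀ z ∈ Q, g * z * g⁻¹ ∈ Q) : g ∈ subnormalizerSubgroup x := by
  apply Subgroup.subset_closure
  have hgn : g ∈ Subgroup.normalizer (Q : Set G) := by
    have : Finite (Q : Set G) := inferInstance
    exact Subgroup.mem_normalizer_fintype hg
  have hN : Subgroup.closure {x, g} ≤ Subgroup.normalizer (Q : Set G) := by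
    rw [Subgroup.closure_le]
    rintro z (rfl | rfl)
    · exact Subgroup.le_normalizer hx
    · exact hgn
  have hxN : x ∈ Subgroup.closure {x, g} := Subgroup.subset_closure (by simp)
  refine subn_of_pgroup hp (Q ⊓ Subgroup.closure {x, g}) _ (hQ.to_le inf_le_left)
    inf_le_right ?_ _ ?_
  · rw [Subgroup.normal_subgroupOf_iff inf_le_right]
    intro h k hh hk
    exact ⟨(Subgroup.mem_normalizer_iff.1 (hN hk) h).1 hh.1,
      Subgroup.mul_mem _ (Subgroup.mul_mem _ hk hh.2) (Subgroup.inv_mem _ hk)⟩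
  · rw [Subgroup.zpowers_le]
    exact ⟨hx, hxN⟩

theorem sub_map_le {G : Type*} [Group G] (f : G →* G) (x h : G)
    (hh : h ∈ subnormalizerSubgroup x) : f h ∈ subnormalizerSubgroup (f x) := by
  have : subnormalizerSubgroup x ≤ (subnormalizerSubgroup (f x)).comap f := by
    unfold subnormalizerSubgroup
    rw [Subgroup.closure_le]
    intro g hg
    apply Subgroup.subset_closure
    have := subn_map f hg
    rw [MonoidHom.map_zpowers, MonoidHom.map_closure, Set.image_pair] at this
    exact this
  exact this hh

theorem sub_le_conj {G : Type*} [Group G] (x n : G) (hn : n ∈ subnormalizerSubgroup x) :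
    subnormalizerSubgroup x ≤ subnormalizerSubgroup (n⁻¹ * x * n) := by
  intro h hh
  have := sub_map_le (MulAut.conj n⁻¹).toMonoidHom x (n * h * n⁻¹)
    (mul_mem (mul_mem hn hh) (inv_mem hn))
  simpa [mul_assoc] using this

theorem sub_conj {G : Type*} [Group G] (x n : G) (hn : n ∈ subnormalizerSubgroup x) :
    subnormalizerSubgroup (n⁻¹ * x * n) = subnormalizerSubgroup x := by
  apply le_antisymm _ (sub_le_conj x n hn)
  have := sub_le_conj (n⁻¹ * x * n) n⁻¹ (inv_mem (sub_le_conj x n hn hn))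
  simpa [mul_assoc] using this

theorem conj_into_sylow {G : Type*} [Group G] [Finite G] {p : ℕ} (hp : p.Prime)
    (H : Subgroup G) (S : Sylow p G) (hS : (S : Subgroup G) ≤ H) (Q : Subgroup G)
    (hQ : IsPGroup p Q) (hQH : Q ≤ H) : ∃ k ∈ H, ∀ z ∈ Q, k⁻¹ * z * k ∈ S := by
  have : Fact p.Prime := ⟨hp⟩
  have hQ' : IsPGroup p (Q.subgroupOf H) :=
    hQ.of_equiv (Subgroup.subgroupOfEquivOfLe hQH).symm
  obtain ⟨T, hT⟩ := hQ'.exists_le_sylow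
  obtain ⟨k, hk⟩ := MulAction.exists_smul_eq H (S.subtype hS) T
  refine ⟨k, k.2, fun z hz => ?_⟩
  have hzT : (⟨z, hQH hz⟩ : H) ∈ T := hT (by simpa [Subgroup.mem_subgroupOf] using hz)
  rw [← hk, ← SetLike.mem_coe, Sylow.coe_smul, Set.mem_smul_set_iff_inv_smul_mem] at hzT
  have hz2 : k⁻¹ * ⟨z, hQH hz⟩ * k ∈ S.subtype hS := by simpa using hzT
  exact hz2

/-- Let `P` be a Sylow `p`-subgroup of a finite group `G` and `x ∈ P`. If `y ∈ Sub_G(x)` is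
conjugate to `x` in `G`, then `x` and `y` are conjugate in `Sub_G(x)`. -/
theorem conj_in_subnormalizer (G : Type*) [Group G] [Fintype G] (p : ℕ) (hp : p.Prime)
    (P : Sylow p G) (x : G) (hx : x ∈ P) (y : G) (hy : y ∈ subnormalizerSubgroup x)
    (hconj : ∃ g : G, g⁻¹ * x * g = y) :
    ∃ k ∈ subnormalizerSubgroup x, k⁻¹ * x * k = y := by
  obtain ⟨g, rfl⟩ := hconj
  refine ⟨g, ?_, rfl⟩
  have key : ∀ (R : Subgroup G) (_ : IsPGroup p R) (z : G) (_ : z ∈ R),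
      R ≤ subnormalizerSubgroup z := fun R hR z hz a ha =>
    mem_sub_of_normalizes hp R hR z hz a fun b hb => mul_mem (mul_mem ha hb) (inv_mem ha)
  -- conjugates of `P`
  have hconjP : ∀ a : G, IsPGroup p ((P : Subgroup G).map (MulAut.conj a⁻¹).toMonoidHom) :=
    fun a => P.isPGroup'.map _
  have hmemP : ∀ a z : G, z ∈ P →
      a⁻¹ * z * a ∈ (P : Subgroup G).map (MulAut.conj a⁻¹).toMonoidHom :=
    fun a z hz => ⟨z, hz, by simp⟩
  have hyp : IsPGroup p (Subgroup.zpowers (g⁻¹ * x * g)) :=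
    (hconjP g).to_le (by rw [Subgroup.zpowers_le]; exact hmemP g x hx)
  obtain ⟨h, hh, hhP⟩ := conj_into_sylow hp (subnormalizerSubgroup x) P
    (key P P.isPGroup' x hx) _ hyp (by rwa [Subgroup.zpowers_le])
  have hyP := hhP _ (Subgroup.mem_zpowers _)
  have e1 : h⁻¹ * (g⁻¹ * x * g) * h = (g * h)⁻¹ * x * (g * h) := by group
  rw [e1] at hyP
  obtain ⟨k, hk, hkP⟩ := conj_into_sylow hp (subnormalizerSubgroup ((g * h)⁻¹ * x * (g * h))) P
    (key P P.isPGroup' _ hyP) _ (hconjP (g * h)) (key _ (hconjP (g * h)) _ (hmemP _ _ hx))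
  have hn : g * h * k ∈ subnormalizerSubgroup x := by
    rw [← inv_mem_iff]
    refine mem_sub_of_normalizes hp P P.isPGroup' x hx _ fun z hz => ?_
    have := hkP _ (hmemP (g * h) z hz)
    have e : (g * h * k)⁻¹ * z * (g * h * k)⁻¹⁻¹ = k⁻¹ * ((g * h)⁻¹ * z * (g * h)) * k := by group
    rw [e]
    exact this
  have h1 := sub_conj x _ hn
  have h2 := sub_conj _ k hk
  have e2 : k⁻¹ * ((g * h)⁻¹ * x * (g * h)) * k = (g * h * k)⁻¹ * x * (g * h * k) := by group
  rw [e2, h1] at h2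
  rw [← h2] at hk
  have := mul_mem (mul_mem hn (inv_mem hk)) (inv_mem hh)
  simpa [mul_assoc] using this
end

section
/- Let n be a positive integer, let G = S_n be the symmetric group on n letters, and let P be a Sylow 2-subgroup of G. Then the number of irreducible complex characters of G of odd degree equals |P/P'|, the index of the commutator subgroup of P in P. -/
noncomputable section

open CategoryTheory

/-- The set of irreducible complex characters of the group `G`. -/
def IrrChar (G : Type) [Group G] : Set (G → ℂ) :=
  {χ | ∃ V : FDRep ℂ G, Simple V ∧ χ = FDRep.character V}

section A
variable {G : Type} [Group G] [Fintype G]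

theorem irr_mem {V : Type} [AddCommGroup V] [Module ℂ V] [FiniteDimensional ℂ V]
    (ρ : Representation ℂ G V) (h : ρ.IsIrreducible) : ρ.character ∈ IrrChar G := by
  refine ⟨FDRep.of ρ, ?_, rfl⟩
  rw [FDRep.simple_iff_char_is_norm_one]
  have := invertibleOfNonzero (NeZero.ne (Nat.card G : ℂ))
  have h1 := Representation.char_orthonormal ρ ρ
  rw [if_pos ⟨Representation.Equiv.refl ρ⟩] at h1
  have h2 : (Nat.card G : ℂ) ≠ 0 := NeZero.ne _
  field_simp at h1
  exact h1.trans (by simp)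

theorem char_mem_closure (d : ℕ) : ∀ {V : Type} [AddCommGroup V] [Module ℂ V] [FiniteDimensional ℂ V]
    (ρ : Representation ℂ G V), Module.finrank ℂ V = d →
    ρ.character ∈ AddSubmonoid.closure (IrrChar G) := by
  induction d using Nat.strong_induction_on with
  | _ d ih =>
    intro V _ _ _ ρ hd
    by_cases hirr : ρ.IsIrreducible
    · exact AddSubmonoid.subset_closure (irr_mem ρ hirr)
    by_cases hV : Subsingleton V
    · have : ρ.character = 0 := by
        ext g
        have : ρ g = 0 := Subsingleton.elim _ _
        simp [Representation.character, this]
      rw [this]; exact zero_mem _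
    have hss : ρ.IsSemisimpleRepresentation := by
      rw [Representation.isSemisimpleRepresentation_iff_isSemisimpleModule_asModule]
      infer_instance
    have hnt : (⊥ : Subrepresentation ρ) ≠ ⊤ := by
      intro h
      apply hV
      have := congrArg Subrepresentation.toSubmodule h
      have h' : (⊥ : Submodule ℂ V) = ⊤ := this
      exact (Submodule.subsingleton_iff ℂ).mp (subsingleton_of_bot_eq_top h')
    obtain ⟨U, hU1, hU2⟩ : ∃ U : Subrepresentation ρ, U ≠ ⊥ ∧ U ≠ ⊤ := by
      by_contra! hcon
      have : Nontrivial (Subrepresentation ρ) := ⟨⟨⊥, ⊤, hnt⟩⟩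
      exact hirr ⟨fun U => or_iff_not_imp_left.mpr (hcon U)⟩
    obtain ⟨W, hW⟩ := exists_isCompl U
    have hc : IsCompl U.toSubmodule W.toSubmodule := by
      constructor
      · rw [disjoint_iff, ← Subrepresentation.toSubmodule_inf, hW.inf_eq_bot]; rfl
      · rw [codisjoint_iff, ← Subrepresentation.toSubmodule_sup, hW.sup_eq_top]; rfl
    have hch : ρ.character = U.toRepresentation.character + W.toRepresentation.character := by
      ext g
      let e := Submodule.prodEquivOfIsCompl _ _ hc
      have h1 : ρ g = e.conj ((U.toRepresentation g).prodMap (W.toRepresentation g)) := by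
        rw [LinearEquiv.conj_apply, LinearEquiv.eq_comp_toLinearMap_symm]
        ext v
        · simp [e]; rfl
        · simp [e]; rfl
      rw [Representation.character, h1, LinearMap.trace_conj', LinearMap.trace_prodMap']
      rfl
    have hsum := Submodule.finrank_add_eq_of_isCompl hc
    have hU : 0 < Module.finrank ℂ U.toSubmodule := by
      rw [Nat.pos_iff_ne_zero, Ne, Submodule.finrank_eq_zero]
      exact fun h => hU1 (Subrepresentation.toSubmodule_injective h)
    have hWp : 0 < Module.finrank ℂ W.toSubmodule := by
      rw [Nat.pos_iff_ne_zero, Ne, Submodule.finrank_eq_zero]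
      intro h
      have h' : W = ⊥ := Subrepresentation.toSubmodule_injective h
      rw [h'] at hW
      exact hU2 (eq_top_of_isCompl_bot hW)
    rw [hch]
    exact add_mem (ih _ (by omega) _ rfl) (ih _ (by omega) _ rfl)

/-- The (bilinear) inner product of functions. -/
def ip (f g : G → ℂ) : ℂ := (Nat.card G : ℂ)⁻¹ * ∑ x, f x * g x⁻¹

theorem ip_add_left (f f' g : G → ℂ) : ip (f + f') g = ip f g + ip f' g := by
  simp [ip, add_mul, Finset.sum_add_distrib, mul_add]

theorem ip_sub_left (f f' g : G → ℂ) : ip (f - f') g = ip f g - ip f' g := by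
  simp [ip, sub_mul, Finset.sum_sub_distrib, mul_sub]

theorem ip_comm (f g : G → ℂ) : ip f g = ip g f := by
  unfold ip
  congr 1
  exact Fintype.sum_equiv (Equiv.inv G) _ _ (fun x => by simp [mul_comm])

theorem ip_sum_left {ι : Type*} (s : Finset ι) (c : ι → ℂ) (f : ι → G → ℂ) (g : G → ℂ) :
    ip (∑ i ∈ s, c i • f i) g = ∑ i ∈ s, c i * ip (f i) g := by
  simp only [ip, Finset.sum_apply, Pi.smul_apply, smul_eq_mul, Finset.sum_mul, Finset.mul_sum]
  rw [Finset.sum_comm]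
  refine Finset.sum_congr rfl fun i _ => Finset.sum_congr rfl fun x _ => by ring

open scoped Classical in
theorem irr_orth {χ χ' : G → ℂ} (h : χ ∈ IrrChar G) (h' : χ' ∈ IrrChar G) :
    ip χ χ' = if χ = χ' then 1 else 0 := by
  obtain ⟨V, hV, rfl⟩ := h
  obtain ⟨W, hW, rfl⟩ := h'
  have := invertibleOfNonzero (NeZero.ne (Nat.card G : ℂ))
  have h1 := FDRep.char_orthonormal V W
  have h2 := FDRep.char_orthonormal V V
  rw [if_pos ⟨Iso.refl _⟩] at h2
  change ip _ _ = _ at h1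
  change ip _ _ = _ at h2
  split_ifs with h
  · rw [← h, h2]
  · rw [h1, if_neg]
    rintro ⟨i⟩
    exact h (FDRep.char_iso i)

/-- Virtual characters. -/
def Virt (G : Type) [Group G] : Submodule ℤ (G → ℂ) := Submodule.span ℤ (IrrChar G)

theorem char_virt {V : Type} [AddCommGroup V] [Module ℂ V] [FiniteDimensional ℂ V]
    (ρ : Representation ℂ G V) : ρ.character ∈ Virt G := by
  have h := char_mem_closure (Module.finrank ℂ V) ρ rfl
  have : AddSubmonoid.closure (IrrChar G) ≤ (Virt G).toAddSubmonoid := by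
    rw [AddSubmonoid.closure_le]
    exact Submodule.subset_span
  exact this h

theorem virt_norm_one {ψ : G → ℂ} (h : ψ ∈ Virt G) (h1 : ip ψ ψ = 1) :
    ∃ χ ∈ IrrChar G, ψ = χ ∨ ψ = -χ := by
  classical
  obtain ⟨c, hc, hs⟩ := Submodule.mem_span_set.mp h
  have hψ : ψ = ∑ χ ∈ c.support, (c χ : ℂ) • χ := by
    rw [← hs, Finsupp.sum]
    refine Finset.sum_congr rfl fun χ _ => ?_
    ext g; simp
  have hip : ∀ χ ∈ c.support, ip ψ χ = c χ := by
    intro χ hχ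
    rw [hψ, ip_sum_left, Finset.sum_eq_single χ]
    · rw [irr_orth (hc hχ) (hc hχ), if_pos rfl, mul_one]
    · intro b hb hne
      rw [irr_orth (hc hb) (hc hχ), if_neg hne, mul_zero]
    · exact fun h => absurd hχ h
  have h2 : ∑ χ ∈ c.support, (c χ) ^ 2 = 1 := by
    have h3 : ip ψ ψ = ∑ χ ∈ c.support, (c χ : ℂ) * ip ψ χ := by
      conv_lhs => rw [hψ]
      rw [ip_sum_left]
      refine Finset.sum_congr rfl fun χ _ => ?_
      rw [← hψ, ip_comm]
    rw [h1, Finset.sum_congr rfl (fun χ hχ => by rw [hip χ hχ, ← pow_two])] at h3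
    exact_mod_cast h3.symm
  have h4 : ∀ χ ∈ c.support, 1 ≤ (c χ) ^ 2 := by
    intro χ hχ
    have := Finsupp.mem_support_iff.mp hχ
    have : 0 < (c χ) ^ 2 := by positivity
    omega
  have h5 : (c.support.card : ℤ) ≤ 1 := by
    rw [← h2]
    calc (c.support.card : ℤ) = ∑ χ ∈ c.support, 1 := by simp
      _ ≤ _ := Finset.sum_le_sum h4
  have h6 : c.support.card = 1 := by
    rcases Nat.eq_zero_or_pos c.support.card with h | h
    · rw [Finset.card_eq_zero] at h
      rw [h] at h2
      simp at h2
    · omega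
  obtain ⟨χ, hχ⟩ := Finset.card_eq_one.mp h6
  rw [hχ, Finset.sum_singleton] at h2 hψ
  refine ⟨χ, hc (by rw [hχ]; simp), ?_⟩
  rcases sq_eq_one_iff.mp h2 with h | h
  · left; rw [hψ, h]; simp
  · right; rw [hψ, h]; simp

theorem char_class {χ : G → ℂ} (h : χ ∈ IrrChar G) {x y : G} (hxy : IsConj x y) : χ x = χ y := by
  obtain ⟨V, _, rfl⟩ := h
  obtain ⟨c, rfl⟩ := isConj_iff.mp hxy
  simp

open scoped Classical in
theorem vanish (x : G) (hreal : ∀ g : G, IsConj g g⁻¹) (S : Finset (G → ℂ)) (hS : ↑S ⊆ IrrChar G)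
    (hintZ : ∀ χ ∈ S, ∀ g, ∃ m : ℤ, χ g = m) (hx : ∀ χ ∈ S, χ x ^ 2 = 1)
    (hcard : Nat.card (Subgroup.centralizer {x}) ≤ S.card) (χ : G → ℂ) (hχ : χ ∈ IrrChar G)
    (hχS : χ ∉ S) : χ x = 0 := by
  set k : ℕ := (Finset.univ.filter (fun g => IsConj x g)).card with hk
  have hkC : k * Nat.card (Subgroup.centralizer {x}) = Nat.card G := by
    rw [Subgroup.nat_card_centralizer_nat_card_stabilizer]
    have h1 := Subgroup.index_mul_card (MulAction.stabilizer (ConjAct G) x)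
    rw [MulAction.index_stabilizer, ConjAct.orbit_eq_carrier_conjClasses] at h1
    have h2 : (ConjClasses.mk x).carrier.ncard = k := by
      rw [hk, ← Set.ncard_coe_finset]
      congr 1
      ext g
      rw [ConjClasses.mem_carrier_iff_mk_eq, ConjClasses.mk_eq_mk_iff_isConj, isConj_comm]
      simp
    rw [h2] at h1
    exact h1
  have hG : (0 : ℝ) < Nat.card G := by exact_mod_cast Nat.card_pos
  have hCpos : (0 : ℝ) < Nat.card (Subgroup.centralizer {x}) := by exact_mod_cast Nat.card_pos
  set c : ℝ := (k : ℝ) / Nat.card G with hc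
  have hcC : c * Nat.card (Subgroup.centralizer {x}) = 1 := by
    rw [hc, ← hkC]; push_cast
    have : (k : ℝ) ≠ 0 := by
      intro h
      have : k = 0 := by exact_mod_cast h
      rw [this, zero_mul] at hkC
      rw [← hkC] at hG; simp at hG
    field_simp
  have hcpos : 0 < c := by
    by_contra h
    push Not at h
    nlinarith
  let f : G → ℂ := fun g => if IsConj x g then 1 else 0
  have hf : ∀ χ ∈ IrrChar G, ip f χ = c * χ x := by
    intro χ hχ
    have : ∀ g, f g * χ g⁻¹ = if IsConj x g then χ x else 0 := by
      intro g
      simp only [f]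
      split_ifs with h
      · rw [one_mul]; exact (char_class hχ (h.trans (hreal g))).symm
      · simp
    simp only [ip, this, ← Finset.sum_filter, Finset.sum_const, ← hk, hc]
    push_cast
    rw [nsmul_eq_mul]; ring
  have hff : ip f f = c := by
    have : ∀ g, f g * f g⁻¹ = if IsConj x g then 1 else 0 := by
      intro g
      simp only [f]
      split_ifs with h h'
      · simp
      · exact absurd (h.trans (hreal g)) h'
      · simp
      · simp
    simp only [ip, this, ← Finset.sum_filter, Finset.sum_const, ← hk, hc]
    push_cast
    rw [nsmul_eq_mul]; ring
  let f' : G → ℂ := f - ∑ χ ∈ S, ((c : ℂ) * χ x) • χ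
  have h1 : ∀ χ ∈ IrrChar G, ip f' χ = if χ ∈ S then 0 else (c : ℂ) * χ x := by
    intro χ hχ
    simp only [f']
    rw [ip_sub_left, ip_sum_left, hf χ hχ]
    rw [Finset.sum_congr rfl (fun χ' hχ' => by rw [irr_orth (hS hχ') hχ])]
    simp
    split_ifs <;> simp
  have h2 : ip f' f' = c - c ^ 2 * S.card := by
    have : ip f' f' = ip f' f := by
      rw [ip_comm]
      conv_lhs => enter [1]; simp only [f']
      rw [ip_sub_left, ip_sum_left, Finset.sum_eq_zero, sub_zero, ip_comm]
      intro χ hχ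
      rw [ip_comm, h1 χ (hS hχ), if_pos hχ, mul_zero]
    rw [this]
    simp only [f']
    rw [ip_sub_left, ip_sum_left, hff]
    congr 1
    rw [Finset.sum_congr rfl (fun χ hχ => by
      rw [ip_comm, hf χ (hS hχ), show (c : ℂ) * χ x * (c * χ x) = c ^ 2 * (χ x ^ 2) by ring,
        hx χ hχ, mul_one])]
    simp [mul_comm]
  have hfr : ∀ g, ∃ r : ℝ, f' g = r := by
    intro g
    have : ∀ χ : G → ℂ, ∃ r : ℝ, χ ∈ S → χ x * χ g = r := by
      intro χ
      by_cases h : χ ∈ S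
      · obtain ⟨m, hm⟩ := hintZ χ h x
        obtain ⟨m', hm'⟩ := hintZ χ h g
        exact ⟨m * m', fun _ => by rw [hm, hm']; push_cast; rfl⟩
      · exact ⟨0, fun h' => absurd h' h⟩
    choose r hr using this
    refine ⟨(if IsConj x g then 1 else 0) - ∑ χ ∈ S, c * r χ, ?_⟩
    simp only [f', f, Pi.sub_apply, Finset.sum_apply, Pi.smul_apply, smul_eq_mul]
    push_cast
    congr 1
    · split_ifs <;> simp
    · refine Finset.sum_congr rfl fun χ hχ => ?_
      rw [← hr χ hχ]; ring
  have hinv : ∀ g, f' g⁻¹ = f' g := by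
    intro g
    have hfg : f g⁻¹ = f g := by
      simp only [f]
      congr 1
      exact propext ⟨fun h => h.trans (hreal g).symm, fun h => h.trans (hreal g)⟩
    simp only [f', Pi.sub_apply, Finset.sum_apply, Pi.smul_apply, smul_eq_mul, hfg]
    congr 1
    refine Finset.sum_congr rfl fun χ hχ => ?_
    rw [char_class (hS hχ) (hreal g).symm]
  choose r hr using hfr
  have h3 : (Nat.card G : ℝ)⁻¹ * ∑ g, r g ^ 2 = c - c ^ 2 * S.card := by
    have h4 : ip f' f' = (((Nat.card G : ℝ)⁻¹ * ∑ g, r g ^ 2 : ℝ) : ℂ) := by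
      simp only [ip, hinv, hr]
      push_cast
      congr 1
      exact Finset.sum_congr rfl fun g _ => by ring
    rw [h4] at h2
    exact_mod_cast h2
  have h5 : c - c ^ 2 * S.card ≤ 0 := by
    have h6 : (Nat.card (Subgroup.centralizer {x}) : ℝ) ≤ S.card := by exact_mod_cast hcard
    have h7 : c * (c * Nat.card (Subgroup.centralizer {x})) ≤ c * (c * S.card) := by gcongr
    rw [hcC] at h7
    linarith
  have h6 : ∑ g, r g ^ 2 = 0 := by
    apply le_antisymm
    · rw [← h3] at h5
      by_contra h
      push Not at h
      have : 0 < (Nat.card G : ℝ)⁻¹ * ∑ g, r g ^ 2 := by positivity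
      linarith
    · positivity
  have h7 : f' = 0 := by
    ext g
    have := (Finset.sum_eq_zero_iff_of_nonneg (fun g _ => sq_nonneg (r g))).mp h6 g (Finset.mem_univ _)
    rw [hr g, pow_eq_zero_iff (by norm_num)] at *
    simp [this]
  have h8 := h1 χ hχ
  rw [h7, if_neg hχS] at h8
  have h9 : ip (0 : G → ℂ) χ = 0 := by simp [ip]
  rw [h9] at h8
  rcases mul_eq_zero.mp h8.symm with h | h
  · exact absurd (by exact_mod_cast h) hcpos.ne'
  · exact h

theorem perm_char_virt (X : Type) [Fintype X] [DecidableEq X] [MulAction G X] :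
    (fun g : G => ((Finset.univ.filter (fun x : X => g • x = x)).card : ℂ)) ∈ Virt G := by
  let ρ : Representation ℂ G (X → ℂ) :=
    { toFun := fun g => LinearMap.funLeft ℂ ℂ (fun x => g⁻¹ • x)
      map_one' := by ext f x; simp [LinearMap.funLeft_apply]
      map_mul' := by intro a b; ext f x; simp [LinearMap.funLeft_apply, mul_smul] }
  have h := char_virt ρ
  convert h using 1
  ext g
  rw [Representation.character,
    LinearMap.trace_eq_matrix_trace ℂ (Pi.basisFun ℂ X)]
  simp [Matrix.trace, ρ, LinearMap.funLeft_apply, Pi.single_apply, eq_comm]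
  congr 1
  ext x
  simp [eq_inv_smul_iff, eq_comm]
end A

theorem exists_max_ideal_two : ∃ M : Ideal (integralClosure ℤ ℂ), M ≠ ⊤ ∧ (2 : integralClosure ℤ ℂ) ∈ M ∧ M.IsMaximal := by
  have h : Ideal.span {(2 : integralClosure ℤ ℂ)} ≠ ⊤ := by
    rw [Ne, Ideal.span_singleton_eq_top]
    intro hu
    obtain ⟨y, hy⟩ := hu.exists_right_inv
    have h1 : (2 : ℂ) * (y : ℂ) = 1 := congrArg Subtype.val hy
    have h2 : IsIntegral ℤ (y : ℂ) := y.2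
    have h3 : (y : ℂ) = algebraMap ℚ ℂ (1 / 2) := by
      have : (y : ℂ) = 1 / 2 := by field_simp; rw [mul_comm]; exact h1
      rw [this]; simp
    rw [h3, isIntegral_algebraMap_iff (algebraMap ℚ ℂ).injective, IsIntegrallyClosed.isIntegral_iff] at h2
    obtain ⟨z, hz⟩ := h2
    have h4 : (z : ℚ) = 1 / 2 := by simpa using hz
    have h5 : (2 * z : ℚ) = 1 := by rw [h4]; norm_num
    have h6 : 2 * z = 1 := by exact_mod_cast h5
    omega
  obtain ⟨M, hM, hle⟩ := Ideal.exists_le_maximal _ h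
  exact ⟨M, hM.ne_top, hle (Ideal.mem_span_singleton_self _), hM⟩

theorem sum_roots_parity (s : Multiset ℂ) (r : ℕ) (hs : ∀ μ ∈ s, μ ^ (2 ^ r) = 1) (m : ℤ)
    (hm : s.sum = m) : (2 : ℤ) ∣ s.card - m := by
  obtain ⟨M, hM, h2, hmax⟩ := exists_max_ideal_two
  have key : ∃ z ∈ M, (z : ℂ) = s.sum - s.card := by
    clear hm
    induction s using Multiset.induction with
    | empty => exact ⟨0, M.zero_mem, by simp⟩
    | cons a s ih =>
      obtain ⟨z, hz, hzs⟩ := ih (fun μ h => hs μ (Multiset.mem_cons_of_mem h))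
      have ha := hs a (Multiset.mem_cons_self a s)
      have hintZ : IsIntegral ℤ a := by
        refine IsIntegral.of_pow (n := 2 ^ r) (by positivity) ?_
        rw [ha]; exact isIntegral_one
      let b : integralClosure ℤ ℂ := ⟨a, hintZ⟩
      have hb : b ^ (2 ^ r) = 1 := by ext; exact ha
      have hbM : b - 1 ∈ M := by
        have : CharP (integralClosure ℤ ℂ ⧸ M) 2 := by
          have : Nontrivial (integralClosure ℤ ℂ ⧸ M) := Ideal.Quotient.nontrivial_iff.mpr hM
          refine CharTwo.of_one_ne_zero_of_two_eq_zero one_ne_zero ?_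
          have := Ideal.Quotient.eq_zero_iff_mem.mpr h2
          rw [← this]; rfl
        rw [← Ideal.Quotient.eq_zero_iff_mem, map_sub, map_one]
        have : IsDomain (integralClosure ℤ ℂ ⧸ M) := Ideal.Quotient.isDomain M
        apply eq_zero_of_pow_eq_zero (n := 2 ^ r)
        rw [sub_pow_char_pow, ← map_pow, hb]
        simp
      refine ⟨z + (b - 1), M.add_mem hz hbM, ?_⟩
      simp [hzs, b]
      ring
  obtain ⟨z, hz, hzs⟩ := key
  have hz' : z = ((m - s.card : ℤ) : integralClosure ℤ ℂ) := by
    ext; rw [hzs, hm]; simp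
  by_contra hnd
  have : ∃ k : ℤ, m - s.card = 2 * k + 1 := by
    refine ⟨(m - s.card) / 2, ?_⟩
    omega
  obtain ⟨k, hk⟩ := this
  rw [hz', hk] at hz
  apply hM
  rw [Ideal.eq_top_iff_one]
  have h3 : (2 : integralClosure ℤ ℂ) * (k : integralClosure ℤ ℂ) ∈ M := M.mul_mem_right _ h2
  have h4 := M.sub_mem hz h3
  push_cast at h4
  simpa using h4

theorem char_parity {G : Type} [Group G] (V : FDRep ℂ G) (x : G) (r : ℕ) (hx : x ^ (2 ^ r) = 1)
    (m : ℤ) (hm : V.character x = m) : (2 : ℤ) ∣ Module.finrank ℂ V - m := by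
  have h1 : V.character x = (LinearMap.charpoly (V.ρ x)).roots.sum := by
    rw [FDRep.character]
    exact Module.End.trace_eq_sum_roots_charpoly_of_splits (IsAlgClosed.splits _)
  have h2 : Multiset.card (LinearMap.charpoly (V.ρ x)).roots = Module.finrank ℂ V := by
    rw [← LinearMap.charpoly_natDegree (V.ρ x)]
    exact (Polynomial.splits_iff_card_roots.mp (IsAlgClosed.splits _))
  rw [← h2]
  refine sum_roots_parity _ r ?_ m (h1 ▸ hm)
  intro μ hμ
  have h3 := Polynomial.isRoot_of_mem_roots hμ
  rw [← Module.End.hasEigenvalue_iff_isRoot_charpoly] at h3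
  obtain ⟨v, hv⟩ := h3.exists_hasEigenvector
  have h4 := hv.pow_apply (2 ^ r)
  rw [← map_pow, hx, map_one] at h4
  have h5 : (1 : ℂ) • v = μ ^ 2 ^ r • v := by simpa using h4
  exact (smul_left_injective ℂ hv.2 h5).symm


open scoped RegularWreathProduct in
theorem wreath_ab_index (D Q : Type*) [Group D] [CommGroup Q] [Finite D] [Finite Q] :
    (commutator (D ≀ᵣ Q)).index = (commutator D).index * Nat.card Q := by
  classical
  have := Fintype.ofFinite Q
  let φ : D ≀ᵣ Q →* Abelianization D × Q :=
    { toFun := fun w => (∏ q, Abelianization.of (w.left q), w.right)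
      map_one' := by ext <;> simp
      map_mul' := by
        intro a b
        ext
        · simp only [RegularWreathProduct.mul_left, Pi.mul_apply, map_mul, Prod.fst_mul, Finset.prod_mul_distrib]
          congr 1
          exact Fintype.prod_equiv (Equiv.mulLeft a.right⁻¹) _ _ (fun x => rfl)
        · simp }
  have hsurj : Function.Surjective φ := by
    rintro ⟨a, q⟩
    obtain ⟨d, rfl⟩ := QuotientGroup.mk_surjective a
    refine ⟨⟨Pi.mulSingle 1 d, q⟩, ?_⟩
    ext
    · change ∏ x, Abelianization.of (Pi.mulSingle (M := fun _ : Q => D) 1 d x) = _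
      rw [Finset.prod_eq_single 1]
      · simp; rfl
      · intro b _ hb; simp [hb]
      · simp
    · rfl
  have hker : φ.ker = commutator (D ≀ᵣ Q) := by
    apply le_antisymm
    · intro w hw
      rw [MonoidHom.mem_ker] at hw
      have h1 : ∏ q, Abelianization.of (w.left q) = 1 := congrArg Prod.fst hw
      have h2 : w.right = 1 := congrArg Prod.snd hw
      rw [← Abelianization.ker_of, MonoidHom.mem_ker]
      let ι : (Q → D) →* D ≀ᵣ Q :=
        { toFun := fun f => ⟨f, 1⟩
          map_one' := rfl
          map_mul' := by
            intro a b
            ext <;> simp [RegularWreathProduct.mul_def] }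
      let ψ : D →* Abelianization (D ≀ᵣ Q) :=
        (Abelianization.of.comp ι).comp (MonoidHom.mulSingle (fun _ : Q => D) 1)
      let h2' : (Q → D) →* Abelianization (D ≀ᵣ Q) :=
        { toFun := fun f => ∏ q, ψ (f q)
          map_one' := by simp
          map_mul' := by intro a b; simp [Finset.prod_mul_distrib] }
      have hEq : Abelianization.of.comp ι = h2' := by
        apply MonoidHom.pi_ext
        intro q d
        change Abelianization.of (ι (Pi.mulSingle q d)) = ∏ r, ψ (Pi.mulSingle (M := fun _ : Q => D) q d r)
        rw [Finset.prod_eq_single q]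
        rotate_left
        · intro b _ hb; simp [hb]
        · simp
        simp only [Pi.mulSingle_eq_same]
        change _ = Abelianization.of (ι (Pi.mulSingle 1 d))
        have : ι (Pi.mulSingle q d) = RegularWreathProduct.inl q * ι (Pi.mulSingle 1 d) * (RegularWreathProduct.inl q)⁻¹ := by
          ext x
          · simp [ι, RegularWreathProduct.mul_def, Pi.mulSingle_apply, inv_mul_eq_one, eq_comm]
          · simp [ι, RegularWreathProduct.mul_def]
        rw [this]
        simp
      have : w = ι w.left := by ext <;> simp [ι, h2]
      rw [this]
      have h3 := DFunLike.congr_fun hEq w.left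
      rw [MonoidHom.comp_apply] at h3
      rw [h3]
      change ∏ q, ψ (w.left q) = 1
      have h4 : ∀ d, ψ d = Abelianization.lift ψ (Abelianization.of d) := by simp
      simp_rw [h4]
      rw [← map_prod, h1, map_one]
    · exact Abelianization.commutator_subset_ker φ
  rw [← hker, Subgroup.index_ker, MonoidHom.range_eq_top.mpr hsurj]
  rw [Subgroup.card_top, Nat.card_prod]
  rfl

theorem iter_ab_index (G : Type*) [CommGroup G] [Finite G] (n : ℕ) :
    (commutator (IteratedWreathProduct G n)).index = Nat.card G ^ n := by
  induction n with
  | zero =>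
    have : Subsingleton (IteratedWreathProduct G 0) := inferInstanceAs (Subsingleton PUnit)
    have h : commutator (IteratedWreathProduct G 0) = ⊤ := Subsingleton.elim _ _
    rw [h, Subgroup.index_top, pow_zero]
  | succ n ih =>
    have := wreath_ab_index (IteratedWreathProduct G n) G
    rw [ih, ← pow_succ] at this
    exact this

theorem index_commutator_congr {A B : Type*} [Group A] [Group B] (e : A ≃* B) :
    (commutator A).index = (commutator B).index :=
  Nat.card_congr e.abelianizationCongr.toEquiv

theorem index_commutator_prod {A B : Type*} [Group A] [Group B] :
    (commutator (A × B)).index = (commutator A).index * (commutator B).index := by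
  rw [← Subgroup.index_prod]
  congr 1
  rw [commutator_def, ← Subgroup.top_prod_top, Subgroup.commutator_prod_prod]
  rfl

theorem sylow_pow_index (q a : ℕ) (hq : q = 2 ^ a) (P : Sylow 2 (Equiv.Perm (Fin q))) :
    (commutator (P : Subgroup (Equiv.Perm (Fin q)))).index = q := by
  have e := Sylow.mulEquivIteratedWreathProduct 2 a (Fin q) (by simp [hq])
    (Multiplicative (ZMod 2)) (by simp) P
  rw [index_commutator_congr e, iter_ab_index]
  simp [hq]

/-- The product of the powers of two in the binary expansion. -/
def binProd (n : ℕ) : ℕ := if h : n = 0 then 1 else 2 ^ (Nat.log 2 n) * binProd (n - 2 ^ Nat.log 2 n)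
decreasing_by exact Nat.sub_lt (Nat.pos_of_ne_zero h) (by positivity)

theorem binProd_step (a m : ℕ) (hm : m < 2 ^ a) : binProd (2 ^ a + m) = 2 ^ a * binProd m := by
  rw [binProd]
  have hlog : Nat.log 2 (2 ^ a + m) = a := by
    rw [Nat.log_eq_iff (Or.inr ⟨by norm_num, by positivity⟩)]
    constructor
    · omega
    · rw [pow_succ]; omega
  have : 2 ^ a + m ≠ 0 := by positivity
  rw [dif_neg this, hlog]
  congr 2
  omega

theorem bin_induction {p : ℕ → Prop} (h0 : p 0)
    (hs : ∀ a m, m < 2 ^ a → p m → p (2 ^ a + m)) (n : ℕ) : p n := by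
  induction n using Nat.strong_induction_on with
  | _ n ih =>
    rcases Nat.eq_zero_or_pos n with rfl | hn
    · exact h0
    · have h1 : 2 ^ Nat.log 2 n ≤ n := Nat.pow_log_le_self 2 hn.ne'
      have h2 : n < 2 ^ (Nat.log 2 n + 1) := Nat.lt_pow_succ_log_self (by norm_num) n
      have h3 := hs (Nat.log 2 n) (n - 2 ^ Nat.log 2 n) (by rw [pow_succ] at h2; omega)
        (ih _ (Nat.sub_lt hn (by positivity)))
      rwa [Nat.add_sub_cancel' h1] at h3

theorem choose_odd (a m : ℕ) (hm : m < 2 ^ a) : ¬ 2 ∣ Nat.choose (2 ^ a + m) (2 ^ a) := by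
  induction a generalizing m with
  | zero => simp at hm; subst hm; simp
  | succ a ih =>
    have h := Choose.choose_modEq_choose_mod_mul_choose_div_nat (p := 2) (n := 2 ^ (a + 1) + m)
      (k := 2 ^ (a + 1))
    have h1 : 2 ^ (a + 1) % 2 = 0 := by rw [pow_succ]; omega
    have h2 : 2 ^ (a + 1) / 2 = 2 ^ a := by rw [pow_succ]; omega
    have h3 : (2 ^ (a + 1) + m) / 2 = 2 ^ a + m / 2 := by rw [pow_succ]; omega
    rw [h1, h2, h3, Nat.choose_zero_right, one_mul] at h
    have h4 := ih (m / 2) (by rw [pow_succ] at hm; omega)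
    have h5 : _ % 2 = _ % 2 := h
    omega

theorem sylow_index (n : ℕ) (P : Sylow 2 (Equiv.Perm (Fin n))) :
    (commutator (P : Subgroup (Equiv.Perm (Fin n)))).index = binProd n := by
  induction n using bin_induction with
  | h0 =>
    have h : commutator (P : Subgroup (Equiv.Perm (Fin 0))) = ⊤ := Subsingleton.elim _ _
    rw [h, Subgroup.index_top, binProd, dif_pos rfl]
  | hs a m hm ih =>
    let Q1 : Sylow 2 (Equiv.Perm (Fin (2 ^ a))) := default
    let Q2 : Sylow 2 (Equiv.Perm (Fin m)) := default
    let f : Equiv.Perm (Fin (2 ^ a)) × Equiv.Perm (Fin m) →* Equiv.Perm (Fin (2 ^ a + m)) :=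
      (finSumFinEquiv.permCongrHom.toMonoidHom).comp (Equiv.Perm.sumCongrHom _ _)
    have hf : Function.Injective f :=
      (finSumFinEquiv.permCongrHom.injective).comp Equiv.Perm.sumCongrHom_injective
    let R := ((Q1 : Subgroup (Equiv.Perm (Fin (2 ^ a)))).prod (Q2 : Subgroup (Equiv.Perm (Fin m)))).map f
    let e1 : ↥(Q1 : Subgroup (Equiv.Perm (Fin (2 ^ a)))) × ↥(Q2 : Subgroup (Equiv.Perm (Fin m))) ≃* R :=
      ((Subgroup.prodEquiv _ _).symm).trans (Subgroup.equivMapOfInjective _ f hf)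
    have hcard : Nat.card R = 2 ^ (Nat.card (Equiv.Perm (Fin (2 ^ a + m)))).factorization 2 := by
      rw [← Nat.card_congr e1.toEquiv, Nat.card_prod, Sylow.card_eq_multiplicity,
        Sylow.card_eq_multiplicity, ← pow_add]
      congr 1
      simp only [Nat.card_perm, Nat.card_fin]
      rw [← Nat.add_choose_mul_factorial_mul_factorial (2 ^ a) m]
      have hodd := choose_odd a m hm
      rw [Nat.choose_symm_add] at hodd
      have hne : (2 ^ a + m).choose m ≠ 0 := fun h => hodd (by simp [h])
      rw [Nat.factorization_mul (mul_ne_zero hne (Nat.factorial_ne_zero _)) (Nat.factorial_ne_zero _),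
        Nat.factorization_mul hne (Nat.factorial_ne_zero _)]
      simp [Nat.factorization_eq_zero_of_not_dvd hodd]
    let P' : Sylow 2 (Equiv.Perm (Fin (2 ^ a + m))) := Sylow.ofCard R hcard
    have e2 : P ≃* R := P.equiv P'
    rw [index_commutator_congr e2, ← index_commutator_congr e1, index_commutator_prod,
      sylow_pow_index _ a rfl, ih Q2, binProd_step a m hm]

section Cauchy
open Finset Matrix
variable {R : Type*} [CommRing R]

def Ecoef {L : ℕ} (b : Fin L → R) (s : Finset (Fin L)) (m : ℕ) : R :=
  ∑ t ∈ s.powersetCard m, ∏ k ∈ t, (-b k)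

theorem prod_Ecoef {L : ℕ} (b : Fin L → R) (s : Finset (Fin L)) (v w : R) :
    ∏ k ∈ s, (w - v * b k) = ∑ m ∈ range (s.card + 1), v ^ m * w ^ (s.card - m) * Ecoef b s m := by
  have h1 : ∏ k ∈ s, (w - v * b k) = ∏ k ∈ s, (v * (-b k) + w) :=
    prod_congr rfl (fun k _ => by ring)
  rw [h1, Finset.prod_add, Finset.sum_powerset]
  refine sum_congr rfl fun m hm => ?_
  rw [Ecoef, mul_sum]
  refine sum_congr rfl fun t ht => ?_
  rw [mem_powersetCard] at ht
  rw [prod_mul_distrib, prod_const, prod_const, card_sdiff_of_subset ht.1, ht.2]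
  ring

theorem projV_mul {L : ℕ} (b v w : Fin L → R) :
    projVandermonde v w * (Matrix.of fun (m j : Fin L) => Ecoef b (univ.erase j) m)
      = Matrix.of fun i j => ∏ k ∈ univ.erase j, (w i - v i * b k) := by
  ext i j
  rw [Matrix.mul_apply, Matrix.of_apply, prod_Ecoef]
  have hc : (univ.erase j : Finset (Fin L)).card = L - 1 := by simp
  have hL : 0 < L := j.pos
  rw [hc, Nat.sub_add_cancel hL, Finset.sum_range]
  refine sum_congr rfl fun m _ => ?_
  rw [projVandermonde_apply, Matrix.of_apply, Fin.val_rev]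
  congr 3
  omega

theorem cauchy_aux [IsDomain R] {L : ℕ} (a b : Fin L → R) (hb : Function.Injective b) :
    (Matrix.of fun i j => ∏ k ∈ univ.erase j, (1 - a i * b k)).det
      = (vandermonde a).det * (vandermonde b).det := by
  have h1 := congrArg Matrix.det (projV_mul b (fun _ => 1) b)
  have h2 := congrArg Matrix.det (projV_mul b a (fun _ => 1))
  rw [det_mul, det_projVandermonde] at h1 h2
  set c := (Matrix.of fun (m j : Fin L) => Ecoef b (univ.erase j) m).det
  have hd : (Matrix.of fun i j => ∏ k ∈ univ.erase j, (b i - 1 * b k))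
      = Matrix.diagonal (fun i => ∏ k ∈ univ.erase i, (b i - b k)) := by
    ext i j
    by_cases h : i = j
    · subst h; simp
    · rw [Matrix.diagonal_apply_ne _ h, Matrix.of_apply]
      exact prod_eq_zero (mem_erase.2 ⟨h, mem_univ _⟩) (by ring)
  rw [hd, det_diagonal] at h1
  have hne : ∏ i : Fin L, ∏ j ∈ Ioi i, (b i - b j) ≠ 0 := by
    refine prod_ne_zero_iff.2 fun i _ => prod_ne_zero_iff.2 fun j hj => ?_
    rw [mem_Ioi] at hj
    exact sub_ne_zero.2 (fun h => hj.ne (hb h))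
  have hsplit : ∏ i : Fin L, ∏ k ∈ univ.erase i, (b i - b k)
      = (∏ i : Fin L, ∏ j ∈ Ioi i, (b i - b j)) * ∏ i : Fin L, ∏ j ∈ Ioi i, (b j - b i) := by
    have : ∀ i : Fin L, ∏ k ∈ univ.erase i, (b i - b k)
        = (∏ j ∈ Ioi i, (b i - b j)) * ∏ j ∈ Iio i, (b i - b j) := by
      intro i
      rw [← prod_union]
      · refine prod_congr ?_ fun _ _ => rfl
        ext k
        simp only [mem_erase, mem_univ, and_true, mem_union, mem_Ioi, mem_Iio]
        constructor
        · intro h; exact (lt_or_gt_of_ne h).symm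
        · rintro (h | h)
          · exact h.ne'
          · exact h.ne
      · rw [disjoint_left]; intro k hk; simp at hk ⊢; exact hk.le
    rw [prod_congr rfl (fun i _ => this i), prod_mul_distrib]
    congr 1
    refine prod_comm' ?_
    intro x y; simp
  have hcv : c = (vandermonde b).det := by
    rw [det_vandermonde]
    rw [hsplit] at h1
    apply mul_left_cancel₀ hne
    rw [← h1]
    simp
  rw [det_vandermonde a, ← hcv, ← h2]
  simp
end Cauchy

section PS
open Finset Matrix

theorem cauchy_ps {R : Type*} [CommRing R] [IsDomain R] {L : ℕ} (x y : Fin L → R)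
    (hy : Function.Injective y) :
    (Matrix.of fun i j => (PowerSeries.mk fun k => (x i * y j) ^ k : PowerSeries R)).det
      = PowerSeries.X ^ (∑ j : Fin L, (j : ℕ)) *
        (PowerSeries.C ((vandermonde x).det * (vandermonde y).det) *
        ∏ p : Fin L × Fin L, (PowerSeries.mk fun k => (x p.1 * y p.2) ^ k : PowerSeries R)) := by
  set geo : Fin L → Fin L → PowerSeries R := fun i j => PowerSeries.mk fun k => (x i * y j) ^ k
    with hgeo
  set a : Fin L → PowerSeries R := fun i => PowerSeries.X * PowerSeries.C (x i) with ha
  set b : Fin L → PowerSeries R := fun i => PowerSeries.C (y i) with hb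
  have hinv : ∀ i j, (1 - a i * b j) * geo i j = 1 := by
    intro i j
    have h1 : a i * b j = PowerSeries.X * PowerSeries.C (x i * y j) := by
      simp only [ha, hb, map_mul]; ring
    rw [h1]
    ext k
    rw [sub_mul, one_mul, map_sub, mul_assoc]
    cases k with
    | zero => simp [hgeo]
    | succ k =>
      rw [PowerSeries.coeff_succ_X_mul, PowerSeries.coeff_C_mul]
      simp [hgeo, PowerSeries.coeff_one, pow_succ']
  have hbi : Function.Injective b := fun i j h => hy (PowerSeries.C_injective h)
  have hca := cauchy_aux a b hbi
  have hm : (Matrix.of fun i j => ∏ k ∈ univ.erase j, (1 - a i * b k))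
      = Matrix.of fun i j => (∏ k, (1 - a i * b k)) * (Matrix.of geo) i j := by
    ext i j
    rw [Matrix.of_apply, Matrix.of_apply, Matrix.of_apply, ← mul_prod_erase univ _ (mem_univ j)]
    congr 1
    rw [mul_right_comm, hinv, one_mul]
  rw [hm, det_mul_column] at hca
  have hva : (vandermonde a).det = PowerSeries.X ^ (∑ j : Fin L, (j : ℕ)) *
      PowerSeries.C (vandermonde x).det := by
    have : vandermonde a = Matrix.of fun (i j : Fin L) => (PowerSeries.X ^ (j : ℕ)) *
        ((PowerSeries.C (R := R)).mapMatrix (vandermonde x)) i j := by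
      ext1 i j
      simp [vandermonde_apply, ha, mul_pow]
    rw [this, det_mul_row, prod_pow_eq_pow_sum, RingHom.map_det]
  have hvb : (vandermonde b).det = PowerSeries.C (vandermonde y).det := by
    have : vandermonde b = (PowerSeries.C (R := R)).mapMatrix (vandermonde y) := by
      ext1 i j
      simp [vandermonde_apply, hb]
    rw [this, RingHom.map_det]
  have hp : (∏ i, ∏ k, (1 - a i * b k)) * ∏ p : Fin L × Fin L, geo p.1 p.2 = 1 := by
    rw [Fintype.prod_prod_type, ← prod_mul_distrib]
    refine prod_eq_one fun i _ => ?_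
    rw [← prod_mul_distrib]
    exact prod_eq_one fun j _ => hinv i j
  calc (Matrix.of geo).det = ((∏ i, ∏ k, (1 - a i * b k)) * (Matrix.of geo).det) *
        ∏ p : Fin L × Fin L, geo p.1 p.2 := by rw [mul_right_comm, hp, one_mul]
    _ = _ := by rw [hca, hva, hvb, map_mul]; ring

theorem cauchy_coeff {R : Type*} [CommRing R] [IsDomain R] {L : ℕ} (x y : Fin L → R)
    (hy : Function.Injective y) (n : ℕ) :
    ∑ w : Equiv.Perm (Fin L), ((Equiv.Perm.sign w : ℤ) : R) *
        ∑ l ∈ finsuppAntidiag (univ : Finset (Fin L)) (n + ∑ j : Fin L, (j : ℕ)),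
          ∏ i, (x (w i) * y i) ^ (l i)
      = (vandermonde x).det * (vandermonde y).det *
        ∑ l ∈ finsuppAntidiag (univ : Finset (Fin L × Fin L)) n,
          ∏ p, (x p.1 * y p.2) ^ (l p) := by
  have h := congrArg (PowerSeries.coeff (n + ∑ j : Fin L, (j : ℕ))) (cauchy_ps x y hy)
  rw [PowerSeries.coeff_X_pow_mul, PowerSeries.coeff_C_mul, PowerSeries.coeff_prod] at h
  simp only [PowerSeries.coeff_mk] at h
  rw [← h, Matrix.det_apply', map_sum]
  refine sum_congr rfl fun w _ => ?_
  have : ((Equiv.Perm.sign w : ℤ) : PowerSeries R) = PowerSeries.C ((Equiv.Perm.sign w : ℤ) : R) := by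
    simp
  rw [this, PowerSeries.coeff_C_mul, PowerSeries.coeff_prod]
  simp
end PS

section Burn
open Finset
variable {ι Λ : Type*} [Fintype ι] [DecidableEq ι] [Fintype Λ] [DecidableEq Λ]

def content (h : ι → Λ) : Λ →₀ ℕ := ∑ k, Finsupp.single (h k) 1

theorem content_apply (h : ι → Λ) (i : Λ) :
    content h i = (univ.filter (fun k => h k = i)).card := by
  simp [content, Finsupp.finsetSum_apply, Finsupp.single_apply]

theorem content_sum (h : ι → Λ) : ∑ i, content h i = Fintype.card ι := by
  simp only [content, Finsupp.finsetSum_apply]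
  rw [sum_comm]
  simp

theorem content_count (d : Λ →₀ ℕ) (hd : ∑ i, d i = Fintype.card ι) :
    (univ.filter (fun h : ι → Λ => content h = d)).card * ∏ i, (d i).factorial
      = (Fintype.card ι).factorial := by
  have h1 := MvPolynomial.coeff_sum_X_pow_of_fintype (R := ℕ) d (Fintype.card ι)
  have h2 : ((∑ i, MvPolynomial.X i : MvPolynomial Λ ℕ)) ^ (Fintype.card ι)
      = ∑ h : ι → Λ, MvPolynomial.monomial (content h) 1 := by
    rw [← Finset.card_univ, ← prod_const, prod_univ_sum, Fintype.piFinset_univ]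
    refine sum_congr rfl fun h _ => ?_
    rw [content, MvPolynomial.monomial_sum_one]
    rfl
  rw [h2, MvPolynomial.coeff_sum] at h1
  simp only [MvPolynomial.coeff_monomial] at h1
  rw [if_pos, Finsupp.multinomial_eq_of_support_subset (subset_univ _)] at h1
  · simp only [sum_boole, Nat.cast_id] at h1
    rw [h1, mul_comm, ← hd]
    exact Nat.multinomial_spec univ d
  · rw [Finsupp.sum_fintype _ _ (by simp), hd]

theorem burnside_sum {R : Type*} [CommRing R] (z : Λ → R) :
    ∑ σ : Equiv.Perm ι, ∑ h : ι → Λ with h ∘ σ = h, ∏ k, z (h k)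
      = ((Fintype.card ι).factorial : R) *
        ∑ d ∈ finsuppAntidiag (univ : Finset Λ) (Fintype.card ι), ∏ i, z i ^ d i := by
  have h0 : ∀ h : ι → Λ, ∏ k, z (h k) = ∏ i, z i ^ (content h i) := by
    intro h
    rw [← Finset.prod_fiberwise univ h]
    refine prod_congr rfl fun i _ => ?_
    rw [content_apply, ← prod_const]
    exact prod_congr rfl fun k hk => by rw [(mem_filter.1 hk).2]
  have h1 : ∀ h : ι → Λ, ((univ.filter (fun σ : Equiv.Perm ι => h ∘ σ = h)).card : ℕ)
      = ∏ i, (content h i).factorial := by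
    intro h
    rw [← Fintype.card_subtype, DomMulAct.stabilizer_card]
    refine prod_congr rfl fun i _ => ?_
    rw [content_apply, Fintype.card_subtype]
  simp only [sum_filter]
  rw [sum_comm]
  have h2 : ∀ h : ι → Λ, (∑ σ : Equiv.Perm ι, if h ∘ σ = h then ∏ k, z (h k) else 0)
      = ((∏ i, (content h i).factorial : ℕ) : R) * ∏ i, z i ^ (content h i) := by
    intro h
    rw [← sum_filter, sum_const, nsmul_eq_mul, h1, h0]
  rw [sum_congr rfl fun h _ => h2 h]
  rw [← sum_fiberwise_of_maps_to (s := univ) (g := content)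
    (t := finsuppAntidiag (univ : Finset Λ) (Fintype.card ι)), mul_sum]
  · refine sum_congr rfl fun d hd => ?_
    rw [mem_finsuppAntidiag] at hd
    rw [sum_congr rfl (g := fun _ => ((∏ i, (d i).factorial : ℕ) : R) * ∏ i, z i ^ d i)]
    · rw [sum_const, nsmul_eq_mul, ← mul_assoc, ← Nat.cast_mul, content_count d hd.1]
    · intro h hh; rw [(mem_filter.1 hh).2]
  · intro h _
    rw [mem_finsuppAntidiag]
    exact ⟨content_sum h, subset_univ _⟩
end Burn

section Frob
open Finset Matrix
variable {ι : Type*} [Fintype ι] [DecidableEq ι]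

def Phi (L : ℕ) (σ : Equiv.Perm ι) : MvPolynomial (Fin L) ℤ :=
  ∑ h : ι → Fin L with h ∘ σ = h, ∏ k, MvPolynomial.X (h k)

def Del (L : ℕ) : MvPolynomial (Fin L) ℤ :=
  (vandermonde (fun i : Fin L => (MvPolynomial.X i : MvPolynomial (Fin L) ℤ))).det

def chi {L : ℕ} (α : Fin L →₀ ℕ) (σ : Equiv.Perm ι) : ℤ := (Del L * Phi L σ).coeff α

theorem phi_pair (L : ℕ) (σ : Equiv.Perm ι) {R : Type*} [CommRing R] (x y : Fin L → R) :
    ∑ h : ι → Fin L × Fin L with h ∘ σ = h, ∏ k, (x (h k).1 * y (h k).2)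
      = (∑ h : ι → Fin L with h ∘ σ = h, ∏ k, x (h k)) *
        ∑ h : ι → Fin L with h ∘ σ = h, ∏ k, y (h k) := by
  rw [sum_mul_sum, ← sum_product']
  refine sum_bij' (fun h _ => (fun k => (h k).1, fun k => (h k).2))
    (fun p _ => fun k => (p.1 k, p.2 k)) ?_ ?_ ?_ ?_ ?_
  · intro h hh
    rw [mem_filter] at hh
    have := hh.2
    simp only [mem_product, mem_filter, mem_univ, true_and]
    constructor
    · funext k; exact congrArg Prod.fst (congrFun this k)
    · funext k; exact congrArg Prod.snd (congrFun this k)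
  · rintro ⟨f, g⟩ hh
    simp only [mem_product, mem_filter, mem_univ, true_and] at hh ⊢
    funext k
    exact Prod.ext (congrFun hh.1 k) (congrFun hh.2 k)
  · intro h _; rfl
  · intro h _; rfl
  · intro h _; simp [prod_mul_distrib]

theorem coeff_coeff {L : ℕ} (p q : MvPolynomial (Fin L) ℤ) (α β : Fin L →₀ ℕ) :
    ((MvPolynomial.map MvPolynomial.C p * MvPolynomial.C q :
      MvPolynomial (Fin L) (MvPolynomial (Fin L) ℤ)).coeff α).coeff β = p.coeff α * q.coeff β := by
  rw [mul_comm, MvPolynomial.coeff_C_mul, MvPolynomial.coeff_map, mul_comm, MvPolynomial.coeff_C_mul]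

theorem map_mon {L : ℕ} (w : Equiv.Perm (Fin L)) (l : Fin L →₀ ℕ) :
    ∏ i, (MvPolynomial.X (w i) : MvPolynomial (Fin L) ℤ) ^ l i
      = MvPolynomial.monomial (∑ i, Finsupp.single (w i) (l i)) 1 := by
  rw [MvPolynomial.monomial_sum_one]
  exact prod_congr rfl fun i _ => MvPolynomial.X_pow_eq_monomial

theorem chi_orth {L : ℕ} (α β : Fin L →₀ ℕ)
    (hβ : ∑ i, β i = Fintype.card ι + ∑ j : Fin L, (j : ℕ)) :
    ∑ σ : Equiv.Perm ι, chi α σ * chi β σ = ((Fintype.card ι).factorial : ℤ) *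
      ∑ w : Equiv.Perm (Fin L), if ∀ i, α (w i) = β i then (Equiv.Perm.sign w : ℤ) else 0 := by
  let x : Fin L → MvPolynomial (Fin L) (MvPolynomial (Fin L) ℤ) := fun i => MvPolynomial.X i
  let y : Fin L → MvPolynomial (Fin L) (MvPolynomial (Fin L) ℤ) := fun i => MvPolynomial.C (MvPolynomial.X i)
  have hy : Function.Injective y := fun i j h =>
    MvPolynomial.X_injective (MvPolynomial.C_injective _ _ h)
  have hA : ∀ σ : Equiv.Perm ι, (MvPolynomial.map MvPolynomial.C (Del L * Phi L σ) *
      MvPolynomial.C (Del L * Phi L σ) : MvPolynomial (Fin L) (MvPolynomial (Fin L) ℤ)) = (vandermonde x).det * (vandermonde y).det *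
        ∑ h : ι → Fin L × Fin L with h ∘ σ = h, ∏ k, (x (h k).1 * y (h k).2) := by
    intro σ
    rw [phi_pair]
    have h1 : MvPolynomial.map MvPolynomial.C (Del L) = (vandermonde x).det := by
      rw [Del, RingHom.map_det]
      congr 1
      ext1 i j
      simp [vandermonde_apply, x]
    have h2 : MvPolynomial.C (Del L) = (vandermonde y).det := by
      rw [Del, RingHom.map_det]
      congr 1
      ext1 i j
      simp [vandermonde_apply, y]
    have h3 : MvPolynomial.map MvPolynomial.C (Phi L σ) =
        ∑ h : ι → Fin L with h ∘ σ = h, ∏ k, x (h k) := by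
      rw [Phi, map_sum]
      simp [map_prod, x]
    have h4 : MvPolynomial.C (Phi L σ) =
        ∑ h : ι → Fin L with h ∘ σ = h, ∏ k, y (h k) := by
      rw [Phi, map_sum]
      simp [map_prod, y]
    rw [map_mul, map_mul, h1, h2, h3, h4]
    ring
  have key := cauchy_coeff x y hy (Fintype.card ι)
  have hb := burnside_sum (ι := ι) (fun p : Fin L × Fin L => x p.1 * y p.2)
  have hsum : ∑ σ : Equiv.Perm ι, (MvPolynomial.map MvPolynomial.C (Del L * Phi L σ) *
      MvPolynomial.C (Del L * Phi L σ) : MvPolynomial (Fin L) (MvPolynomial (Fin L) ℤ)) = ((Fintype.card ι).factorial : MvPolynomial (Fin L) (MvPolynomial (Fin L) ℤ)) *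
      ∑ w : Equiv.Perm (Fin L), ((Equiv.Perm.sign w : ℤ) : MvPolynomial (Fin L) (MvPolynomial (Fin L) ℤ)) *
        ∑ l ∈ finsuppAntidiag (univ : Finset (Fin L)) (Fintype.card ι + ∑ j : Fin L, (j : ℕ)),
          ∏ i, (x (w i) * y i) ^ (l i) := by
    rw [sum_congr rfl fun σ _ => hA σ, ← mul_sum, hb, key]
    ring
  have hsum2 : ∑ σ : Equiv.Perm ι, (MvPolynomial.map MvPolynomial.C (Del L * Phi L σ) *
      MvPolynomial.C (Del L * Phi L σ) : MvPolynomial (Fin L) (MvPolynomial (Fin L) ℤ)) = 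
      ∑ w : Equiv.Perm (Fin L), 
        ∑ l ∈ finsuppAntidiag (univ : Finset (Fin L)) (Fintype.card ι + ∑ j : Fin L, (j : ℕ)),
          MvPolynomial.map MvPolynomial.C (MvPolynomial.C
            (((Fintype.card ι).factorial : ℤ) * (Equiv.Perm.sign w : ℤ)) *
            MvPolynomial.monomial (∑ i, Finsupp.single (w i) (l i)) 1) *
            MvPolynomial.C (MvPolynomial.monomial l 1) := by
    rw [hsum, mul_sum]
    refine sum_congr rfl fun w _ => ?_
    rw [mul_sum, mul_sum]
    refine sum_congr rfl fun l _ => ?_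
    have e1 := map_mon w l
    have e2 := map_mon 1 l
    simp only [Equiv.Perm.coe_one, id, Finsupp.univ_sum_single] at e2
    rw [← e1, ← e2]
    simp only [mul_pow, prod_mul_distrib, x, y, map_mul, map_prod, map_pow, MvPolynomial.map_X,
      MvPolynomial.map_C]
    simp [mul_assoc]
  have h := congrArg (fun p : MvPolynomial (Fin L) (MvPolynomial (Fin L) ℤ) => (p.coeff α).coeff β) hsum2
  simp only [MvPolynomial.coeff_sum, coeff_coeff] at h
  simp only [chi]
  rw [h, mul_sum]
  refine sum_congr rfl fun w _ => ?_
  rw [sum_eq_single β]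
  · rw [MvPolynomial.coeff_C_mul, MvPolynomial.coeff_monomial, MvPolynomial.coeff_monomial,
      if_pos rfl, mul_one, mul_assoc]
    congr 1
    have : (∑ i, Finsupp.single (w i) (β i) = α) ↔ ∀ i, α (w i) = β i := by
      have hv : ∀ i, (∑ i, Finsupp.single (w i) (β i)) (w i) = β i := by
        intro i
        simp [Finsupp.finsetSum_apply, Finsupp.single_apply]
      constructor
      · intro h i; rw [← h, hv]
      · intro h
        ext k
        obtain ⟨i, rfl⟩ := w.surjective k
        rw [hv, h]
    simp only [this]
    split_ifs <;> simp
  · intro l _ hl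
    rw [MvPolynomial.coeff_monomial, if_neg hl, mul_zero]
  · intro hn
    exact absurd (mem_finsuppAntidiag.2 ⟨hβ, subset_univ _⟩) hn
end Frob

section Virtual
open Finset
variable {ι : Type} [Fintype ι] [DecidableEq ι]

theorem comp_inv_iff {L : ℕ} (σ : Equiv.Perm ι) (h : ι → Fin L) :
    h ∘ (σ⁻¹ : Equiv.Perm ι) = h ↔ h ∘ σ = h := by
  constructor
  · intro hh
    funext k
    have := congrFun hh (σ k)
    simpa using this.symm
  · intro hh
    funext k
    have := congrFun hh (σ⁻¹ k)
    simpa using this.symm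

theorem content_comp {L : ℕ} (σ : Equiv.Perm ι) (h : ι → Fin L) :
    content (h ∘ σ) = content h := by
  unfold content
  exact Equiv.sum_comp σ (fun k => Finsupp.single (h k) 1)

theorem phi_inv (L : ℕ) (σ : Equiv.Perm ι) : Phi L σ⁻¹ = Phi L σ := by
  unfold Phi
  simp only [comp_inv_iff]

theorem chi_inv {L : ℕ} (α : Fin L →₀ ℕ) (σ : Equiv.Perm ι) : chi α σ⁻¹ = chi α σ := by
  unfold chi
  rw [phi_inv]

theorem phi_coeff (L : ℕ) (σ : Equiv.Perm ι) (δ : Fin L →₀ ℕ) :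
    (Phi L σ).coeff δ = ((univ.filter
      (fun h : ι → Fin L => h ∘ σ = h ∧ content h = δ)).card : ℤ) := by
  have : ∀ h : ι → Fin L, ∏ k, (MvPolynomial.X (h k) : MvPolynomial (Fin L) ℤ)
      = MvPolynomial.monomial (content h) 1 := by
    intro h
    rw [content, MvPolynomial.monomial_sum_one]
    rfl
  rw [Phi, MvPolynomial.coeff_sum]
  simp only [this, MvPolynomial.coeff_monomial]
  rw [sum_boole, filter_filter]

def contentAction (L : ℕ) (δ : Fin L →₀ ℕ) :
    MulAction (Equiv.Perm ι) {h : ι → Fin L // content h = δ} where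
  smul σ h := ⟨h.1 ∘ (σ⁻¹ : Equiv.Perm ι), by rw [content_comp, h.2]⟩
  one_smul h := by
    apply Subtype.ext
    rfl
  mul_smul a b h := by
    apply Subtype.ext
    change h.1 ∘ ((a * b)⁻¹ : Equiv.Perm ι) = (h.1 ∘ (b⁻¹ : Equiv.Perm ι)) ∘ (a⁻¹ : Equiv.Perm ι)
    rw [mul_inv_rev, Equiv.Perm.coe_mul]
    rfl

theorem phi_coeff_virt (L : ℕ) (δ : Fin L →₀ ℕ) :
    (fun σ : Equiv.Perm ι => (((Phi L σ).coeff δ : ℤ) : ℂ)) ∈ Virt (Equiv.Perm ι) := by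
  letI := contentAction (ι := ι) L δ
  have h := perm_char_virt (G := Equiv.Perm ι) {h : ι → Fin L // content h = δ}
  convert h using 2 with σ
  rw [phi_coeff]
  norm_cast
  rw [← Fintype.card_subtype, ← Fintype.card_subtype]
  refine Fintype.card_congr ?_
  refine ⟨fun h => ⟨⟨h.1, h.2.2⟩, ?_⟩, fun h => ⟨h.1.1, ?_, h.1.2⟩, fun _ => rfl, fun _ => rfl⟩
  · apply Subtype.ext
    exact (comp_inv_iff σ h.1).2 h.2.1
  · exact (comp_inv_iff σ h.1.1).1 (congrArg Subtype.val h.2)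

theorem chi_virt {L : ℕ} (α : Fin L →₀ ℕ) :
    (fun σ : Equiv.Perm ι => ((chi α σ : ℤ) : ℂ)) ∈ Virt (Equiv.Perm ι) := by
  have : (fun σ : Equiv.Perm ι => ((chi α σ : ℤ) : ℂ)) =
      ∑ γ ∈ antidiagonal α, ((Del L).coeff γ.1) •
        (fun σ : Equiv.Perm ι => (((Phi L σ).coeff γ.2 : ℤ) : ℂ)) := by
    funext σ
    rw [chi, MvPolynomial.coeff_mul]
    simp
  rw [this]
  exact Submodule.sum_mem _ fun γ _ => Submodule.smul_mem _ _ (phi_coeff_virt L γ.2)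

theorem chi_ip {L : ℕ} (α β : Fin L →₀ ℕ)
    (hβ : ∑ i, β i = Fintype.card ι + ∑ j : Fin L, (j : ℕ)) :
    ip (fun σ : Equiv.Perm ι => ((chi α σ : ℤ) : ℂ)) (fun σ => ((chi β σ : ℤ) : ℂ)) =
      ((∑ w : Equiv.Perm (Fin L), if ∀ i, α (w i) = β i then (Equiv.Perm.sign w : ℤ) else 0 : ℤ)
        : ℂ) := by
  have h := congrArg (Int.cast : ℤ → ℂ) (chi_orth (ι := ι) α β hβ)
  unfold ip
  simp only [chi_inv]
  rw [Int.cast_sum, Int.cast_mul] at h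
  simp only [Int.cast_mul] at h
  rw [h, Nat.card_perm, Nat.card_eq_fintype_card, ← mul_assoc]
  have : ((Fintype.card ι).factorial : ℂ) ≠ 0 := by exact_mod_cast Nat.factorial_ne_zero _
  rw [Int.cast_natCast, inv_mul_cancel₀ this, one_mul]
end Virtual

section Comb
open Finset

theorem sum_range_card_le (s : Finset ℕ) : ∑ i ∈ range s.card, i ≤ ∑ x ∈ s, x := by
  induction s using Finset.induction_on_max with
  | empty => simp
  | insert a s h ih =>
    have ha : a ∉ s := fun h' => lt_irrefl _ (h a h')
    have hc : s.card ≤ a := by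
      have : s ⊆ range a := fun x hx => mem_range.2 (h x hx)
      simpa using card_le_card this
    rw [card_insert_of_notMem ha, sum_insert ha, sum_range_succ]
    omega

theorem inj_sum_ge {L : ℕ} (f : Fin L → ℕ) (hf : Function.Injective f) :
    ∑ j : Fin L, (j : ℕ) ≤ ∑ j, f j := by
  have h := sum_range_card_le (univ.image f)
  rw [card_image_of_injective _ hf, sum_image (fun _ _ _ _ h => hf h), card_univ, Fintype.card_fin,
    Finset.sum_range] at h
  exact h

theorem inj_sum_insert {L : ℕ} (f : Fin L → ℕ) (hf : Function.Injective f) (r : ℕ)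
    (hr : ∀ i, f i ≠ r) : (∑ j : Fin L, (j : ℕ)) + L ≤ (∑ j, f j) + r := by
  have hn : r ∉ univ.image f := by simpa using hr
  have h := sum_range_card_le (insert r (univ.image f))
  rw [card_insert_of_notMem hn, sum_insert hn, card_image_of_injective _ hf,
    sum_image (fun _ _ _ _ h => hf h), card_univ, Fintype.card_fin,
    Finset.sum_range_succ, Finset.sum_range] at h
  omega

structure Good (L : ℕ) (F : MvPolynomial (Fin L) ℤ) (m K : ℕ) : Prop where
  anti : ∀ i j : Fin L, i ≠ j → MvPolynomial.rename (Equiv.swap i j) F = -F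
  deg : ∀ α ∈ F.support, ∑ i, α i = m + ∑ j : Fin L, (j : ℕ)
  unit : ∀ α ∈ F.support, F.coeff α = 1 ∨ F.coeff α = -1
  card : K ≤ F.support.card

theorem anti_inj {L : ℕ} {F : MvPolynomial (Fin L) ℤ}
    (anti : ∀ i j : Fin L, i ≠ j → MvPolynomial.rename (Equiv.swap i j) F = -F)
    (α : Fin L →₀ ℕ) (hα : F.coeff α ≠ 0) : Function.Injective α := by
  intro i j hij
  by_contra hne
  have h := MvPolynomial.coeff_rename_mapDomain (Equiv.swap i j) (Equiv.injective _) F α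
  have h2 : α.mapDomain (Equiv.swap i j) = α := by
    ext k
    rw [Finsupp.mapDomain_equiv_apply, Equiv.symm_swap]
    by_cases h1 : k = i
    · subst h1; rw [Equiv.swap_apply_left, hij]
    · by_cases h2 : k = j
      · subst h2; rw [Equiv.swap_apply_right, hij]
      · rw [Equiv.swap_apply_of_ne_of_ne h1 h2]
  rw [h2, anti i j hne, MvPolynomial.coeff_neg] at h
  omega

theorem good_base (L : ℕ) : Good L (Del L) 0 L.factorial := by
  classical
  have hdel : Del L = ∑ w : Equiv.Perm (Fin L), MvPolynomial.monomial
      (∑ i : Fin L, Finsupp.single (w i) (i : ℕ)) (Equiv.Perm.sign w : ℤ) := by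
    rw [Del, Matrix.det_apply']
    refine sum_congr rfl fun w _ => ?_
    have : MvPolynomial.monomial (∑ i : Fin L, Finsupp.single (w i) (i : ℕ))
        (Equiv.Perm.sign w : ℤ) = MvPolynomial.C (Equiv.Perm.sign w : ℤ) *
        MvPolynomial.monomial (∑ i : Fin L, Finsupp.single (w i) (i : ℕ)) 1 := by
      rw [MvPolynomial.C_mul_monomial, mul_one]
    rw [this, MvPolynomial.monomial_sum_one]
    congr 1
    exact prod_congr rfl fun i _ => by
      rw [Matrix.vandermonde_apply, MvPolynomial.X_pow_eq_monomial]
  set e : Equiv.Perm (Fin L) → (Fin L →₀ ℕ) :=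
    fun w => ∑ i : Fin L, Finsupp.single (w i) (i : ℕ) with he
  have hv : ∀ w i, e w (w i) = i := by
    intro w i
    simp [he, Finsupp.finsetSum_apply, Finsupp.single_apply]
  have hinj : Function.Injective e := by
    intro w w' h
    ext i
    have h1 := hv w i
    obtain ⟨j, hj⟩ := w'.surjective (w i)
    rw [h, ← hj, hv] at h1
    have : j = i := Fin.ext h1
    rw [← hj, this]
  have hc : ∀ w, (Del L).coeff (e w) = (Equiv.Perm.sign w : ℤ) := by
    intro w
    rw [hdel, MvPolynomial.coeff_sum, sum_eq_single w]
    · rw [MvPolynomial.coeff_monomial, if_pos rfl]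
    · intro w' _ hne
      rw [MvPolynomial.coeff_monomial, if_neg (fun h => hne (hinj h))]
    · simp
  have hs : ∀ α ∈ (Del L).support, ∃ w, e w = α := by
    intro α hα
    by_contra hno
    push Not at hno
    rw [MvPolynomial.mem_support_iff] at hα
    apply hα
    rw [hdel, MvPolynomial.coeff_sum]
    refine sum_eq_zero fun w _ => ?_
    rw [MvPolynomial.coeff_monomial, if_neg (hno w)]
  refine ⟨?_, ?_, ?_, ?_⟩
  · intro i j hij
    rw [Del, AlgHom.map_det]
    have : (MvPolynomial.rename (Equiv.swap i j)).mapMatrix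
        (Matrix.vandermonde (fun i : Fin L => (MvPolynomial.X i : MvPolynomial (Fin L) ℤ)))
        = (Matrix.vandermonde (fun i : Fin L => (MvPolynomial.X i : MvPolynomial (Fin L) ℤ))).submatrix
          (Equiv.swap i j) id := by
      ext1 a b
      simp [Matrix.vandermonde_apply]
    rw [this, Matrix.det_permute, Equiv.Perm.sign_swap hij]
    simp
  · intro α hα
    obtain ⟨w, rfl⟩ := hs α hα
    rw [← Equiv.sum_comp w, zero_add]
    exact sum_congr rfl fun i _ => hv w i
  · intro α hα
    obtain ⟨w, rfl⟩ := hs α hα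
    rw [hc]
    rcases Int.units_eq_one_or (Equiv.Perm.sign w) with h | h <;> simp [h]
  · have : (univ.image e) ⊆ (Del L).support := by
      intro α hα
      obtain ⟨w, _, rfl⟩ := mem_image.1 hα
      rw [MvPolynomial.mem_support_iff, hc]
      simp
    have h := card_le_card this
    rw [card_image_of_injective _ hinj, card_univ, Fintype.card_perm, Fintype.card_fin] at h
    exact h

def psum (L q : ℕ) : MvPolynomial (Fin L) ℤ := ∑ i : Fin L, MvPolynomial.X i ^ q

theorem coeff_psum {L q : ℕ} (F : MvPolynomial (Fin L) ℤ) (α : Fin L →₀ ℕ) :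
    (F * psum L q).coeff α =
      ∑ i : Fin L, if q ≤ α i then F.coeff (α - Finsupp.single i q) else 0 := by
  rw [psum, mul_sum, MvPolynomial.coeff_sum]
  refine sum_congr rfl fun i _ => ?_
  rw [MvPolynomial.X_pow_eq_monomial, MvPolynomial.coeff_mul_monomial']
  simp [Finsupp.single_le_iff]

theorem unique_hook {L m q : ℕ} (hmq : m < q) (α : Fin L →₀ ℕ) (hα : Function.Injective α)
    (hdeg : ∑ i, α i = m + q + ∑ j : Fin L, (j : ℕ)) (i k : Fin L)
    (hi : q ≤ α i) (hk : q ≤ α k)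
    (hi' : Function.Injective (α - Finsupp.single i q))
    (hk' : Function.Injective (α - Finsupp.single k q)) : i = k := by
  by_contra hne
  let γ : Fin L → ℕ := fun l => if l = i ∨ l = k then α l - q else α l
  have hvi : ∀ l, (α - Finsupp.single i q) l = if l = i then α l - q else α l := by
    intro l
    by_cases h : l = i
    · subst h; simp
    · simp [h, Finsupp.single_apply, Ne.symm h]
  have hvk : ∀ l, (α - Finsupp.single k q) l = if l = k then α l - q else α l := by
    intro l
    by_cases h : l = k
    · subst h; simp
    · simp [h, Finsupp.single_apply, Ne.symm h]
  have hγ : Function.Injective γ := by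
    intro a b hab
    by_contra hab'
    have h1 := fun h => hab' (hα (a₁ := a) (a₂ := b) h)
    have h2 := fun h => hab' (hi' (a₁ := a) (a₂ := b) h)
    have h3 := fun h => hab' (hk' (a₁ := a) (a₂ := b) h)
    rw [hvi, hvi] at h2
    rw [hvk, hvk] at h3
    simp only [γ] at hab
    grind
  have h := inj_sum_ge γ hγ
  have hs : ∑ l, γ l + 2 * q = ∑ l, α l := by
    have : ∀ l, α l = γ l + ((if l = i then q else 0) + (if l = k then q else 0)) := by
      intro l
      simp only [γ]
      grind
    rw [sum_congr rfl fun l _ => this l, sum_add_distrib, sum_add_distrib]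
    simp
    omega
  omega

theorem many_hooks {L m q : ℕ} (hq : 0 < q) (hL : m + q ≤ L) (β : Fin L → ℕ)
    (hβ : Function.Injective β) (hdeg : ∑ i, β i = m + ∑ j : Fin L, (j : ℕ)) :
    q ≤ (univ.filter (fun i => ∀ l, β l ≠ β i + q)).card := by
  have hex : ∀ r : Fin q, ∃ i, β i % q = r ∧ ∀ l, β l ≠ β i + q := by
    intro r
    have h1 : ∃ i, β i = r := by
      by_contra hno
      push Not at hno
      have := inj_sum_insert β hβ r hno
      have := r.2
      omega
    obtain ⟨i0, hi0⟩ := h1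
    obtain ⟨i, hi, hmax⟩ := exists_max_image (univ.filter (fun i => β i % q = r)) β
      ⟨i0, by simp [hi0, Nat.mod_eq_of_lt r.2]⟩
    rw [mem_filter] at hi
    refine ⟨i, hi.2, fun l hl => ?_⟩
    have := hmax l (by simp [hl, hi.2])
    omega
  choose f hf1 hf2 using hex
  have hinj : Function.Injective f := by
    intro r r' h
    apply Fin.ext
    rw [← hf1 r, ← hf1 r', h]
  have : univ.image f ⊆ univ.filter (fun i => ∀ l, β l ≠ β i + q) := by
    intro i hi
    obtain ⟨r, _, rfl⟩ := mem_image.1 hi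
    exact mem_filter.2 ⟨mem_univ _, hf2 r⟩
  have h := card_le_card this
  rwa [card_image_of_injective _ hinj, card_univ, Fintype.card_fin] at h

theorem good_step {L m q K : ℕ} {F : MvPolynomial (Fin L) ℤ} (hF : Good L F m K) (hmq : m < q)
    (hL : m + q ≤ L) : Good L (F * psum L q) (m + q) (q * K) := by
  have hFi : ∀ α, F.coeff α ≠ 0 → Function.Injective α := anti_inj hF.anti
  have anti : ∀ i j : Fin L, i ≠ j →
      MvPolynomial.rename (Equiv.swap i j) (F * psum L q) = -(F * psum L q) := by
    intro i j hij
    have : MvPolynomial.rename (Equiv.swap i j) (psum L q) = psum L q := by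
      rw [psum, map_sum]
      simp only [map_pow, MvPolynomial.rename_X]
      exact Equiv.sum_comp (Equiv.swap i j)
        (fun i => (MvPolynomial.X i : MvPolynomial (Fin L) ℤ) ^ q)
    rw [map_mul, this, hF.anti i j hij, neg_mul]
  have hGi := anti_inj anti
  have deg : ∀ (α : Fin L →₀ ℕ) i, q ≤ α i → F.coeff (α - Finsupp.single i q) ≠ 0 →
      ∑ i, α i = m + q + ∑ j : Fin L, (j : ℕ) := by
    intro α i hi hc
    have h := hF.deg _ (MvPolynomial.mem_support_iff.2 hc)
    have h2 : α = (α - Finsupp.single i q) + Finsupp.single i q :=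
      (tsub_add_cancel_of_le (Finsupp.single_le_iff.2 hi)).symm
    rw [h2]
    simp only [Finsupp.add_apply, sum_add_distrib, h]
    have : ∑ x, (Finsupp.single i q) x = q := by
      simp [Finsupp.single_apply]
    omega
  have val : ∀ (α : Fin L →₀ ℕ) i, Function.Injective α → q ≤ α i →
      F.coeff (α - Finsupp.single i q) ≠ 0 →
      (F * psum L q).coeff α = F.coeff (α - Finsupp.single i q) := by
    intro α i hα hi hc
    rw [coeff_psum, sum_eq_single i, if_pos hi]
    · intro k _ hki
      split_ifs with hk
      · by_contra hc'
        exact hki (unique_hook hmq α hα (deg α i hi hc) k i hk hi (hFi _ hc') (hFi _ hc))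
      · rfl
    · simp
  have ex : ∀ α, (F * psum L q).coeff α ≠ 0 → ∃ i, q ≤ α i ∧
      F.coeff (α - Finsupp.single i q) ≠ 0 := by
    intro α hα
    rw [coeff_psum] at hα
    obtain ⟨i, _, hi⟩ := exists_ne_zero_of_sum_ne_zero hα
    refine ⟨i, ?_⟩
    split_ifs at hi with h
    · exact ⟨h, hi⟩
    · exact absurd rfl hi
  refine ⟨anti, ?_, ?_, ?_⟩
  · intro α hα
    obtain ⟨i, hi, hc⟩ := ex α (MvPolynomial.mem_support_iff.1 hα)
    exact deg α i hi hc
  · intro α hα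
    rw [MvPolynomial.mem_support_iff] at hα
    obtain ⟨i, hi, hc⟩ := ex α hα
    rw [val α i (hGi α hα) hi hc]
    exact hF.unit _ (MvPolynomial.mem_support_iff.2 hc)
  · let T : Finset ((_ : Fin L →₀ ℕ) × Fin L) :=
      F.support.sigma (fun β => univ.filter (fun i => ∀ l, β l ≠ β i + q))
    have hT : q * K ≤ T.card := by
      rw [card_sigma]
      calc q * K ≤ q * F.support.card := Nat.mul_le_mul_left _ hF.card
        _ = ∑ _β ∈ F.support, q := by rw [sum_const, smul_eq_mul, mul_comm]
        _ ≤ _ := sum_le_sum fun β hβ => many_hooks (by omega) hL β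
          (hFi β (MvPolynomial.mem_support_iff.1 hβ)) (hF.deg β hβ)
    refine hT.trans (card_le_card_of_injOn (fun p => p.1 + Finsupp.single p.2 q) ?_ ?_)
    all_goals
      have hprop : ∀ p ∈ T, Function.Injective (p.1 + Finsupp.single p.2 q) ∧
          q ≤ (p.1 + Finsupp.single p.2 q) p.2 ∧
          F.coeff ((p.1 + Finsupp.single p.2 q) - Finsupp.single p.2 q) ≠ 0 := by
        rintro ⟨β, i⟩ hp
        rw [mem_sigma, mem_filter] at hp
        simp only at hp ⊢
        refine ⟨?_, by simp, ?_⟩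
        · have hβ := hFi β (MvPolynomial.mem_support_iff.1 hp.1)
          have hv : ∀ l, (β + Finsupp.single i q) l = if l = i then β l + q else β l := by
            intro l
            by_cases h : l = i
            · subst h; simp
            · simp [h, Finsupp.single_apply, Ne.symm h]
          intro a b hab
          rw [hv, hv] at hab
          by_contra hne
          have h1 := fun h => hne (hβ (a₁ := a) (a₂ := b) h)
          have h2 := hp.2.2 a
          have h3 := hp.2.2 b
          grind
        · rw [add_tsub_cancel_right]
          exact MvPolynomial.mem_support_iff.1 hp.1
    · intro p hp
      obtain ⟨h1, h2, h3⟩ := hprop p hp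
      rw [mem_coe, MvPolynomial.mem_support_iff, val _ _ h1 h2 h3]
      exact h3
    · rintro ⟨β, i⟩ hp ⟨β', i'⟩ hp' heq
      obtain ⟨h1, h2, h3⟩ := hprop _ hp
      obtain ⟨h1', h2', h3'⟩ := hprop _ hp'
      simp only at heq h1 h2 h3 h1' h2' h3'
      rw [← heq] at h1' h2' h3'
      have hii := unique_hook hmq _ h1 (deg _ _ h2 h3) i i' h2 h2' (hFi _ h3) (hFi _ h3')
      subst hii
      have := add_right_cancel heq
      subst this
      rfl
end Comb

section Elem
open Finset

theorem cycleType_embed {α β : Type*} [Fintype α] [DecidableEq α] [Fintype β] [DecidableEq β]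
    (j : α → β) (hj : Function.Injective j) (σ : Equiv.Perm α) (g : Equiv.Perm β)
    (h1 : ∀ a, g (j a) = j (σ a)) (h2 : ∀ b, b ∉ Set.range j → g b = b) :
    g.cycleType = σ.cycleType := by
  classical
  have : g = σ.extendDomain (Equiv.ofInjective j hj) := by
    ext b
    by_cases hb : b ∈ Set.range j
    · obtain ⟨a, rfl⟩ := hb
      have := Equiv.Perm.extendDomain_apply_image σ (Equiv.ofInjective j hj) a
      simp only [Equiv.ofInjective_apply] at this
      rw [this, h1]
    · rw [Equiv.Perm.extendDomain_apply_not_subtype _ _ hb, h2 b hb]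
  rw [this, Equiv.Perm.cycleType_extendDomain]

/-- The direct sum of two permutations, transported to `Fin (a + b)`. -/
def psumPerm {a b : ℕ} (σ : Equiv.Perm (Fin a)) (τ : Equiv.Perm (Fin b)) :
    Equiv.Perm (Fin (a + b)) :=
  finSumFinEquiv.permCongr (Equiv.Perm.sumCongr σ τ)

theorem psumPerm_cycleType {a b : ℕ} (σ : Equiv.Perm (Fin a)) (τ : Equiv.Perm (Fin b)) :
    (psumPerm σ τ).cycleType = σ.cycleType + τ.cycleType := by
  have hl : ∀ (σ : Equiv.Perm (Fin a)) (τ : Equiv.Perm (Fin b)) i,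
      psumPerm σ τ (finSumFinEquiv (Sum.inl i)) = finSumFinEquiv (Sum.inl (σ i)) := by
    intro σ τ i
    rw [psumPerm, Equiv.permCongr_apply, Equiv.symm_apply_apply, Equiv.Perm.sumCongr_apply,
      Sum.map_inl]
  have hr : ∀ (σ : Equiv.Perm (Fin a)) (τ : Equiv.Perm (Fin b)) i,
      psumPerm σ τ (finSumFinEquiv (Sum.inr i)) = finSumFinEquiv (Sum.inr (τ i)) := by
    intro σ τ i
    rw [psumPerm, Equiv.permCongr_apply, Equiv.symm_apply_apply, Equiv.Perm.sumCongr_apply,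
      Sum.map_inr]
  have hmul : psumPerm σ τ = psumPerm σ 1 * psumPerm 1 τ := by
    apply Equiv.ext
    intro k
    obtain ⟨s, rfl⟩ := finSumFinEquiv.surjective k
    rw [Equiv.Perm.mul_apply]
    rcases s with i | i
    · rw [hl, hl, hl]; rfl
    · rw [hr, hr, hr]; rfl
  have hdis : Equiv.Perm.Disjoint (psumPerm σ (1 : Equiv.Perm (Fin b)))
      (psumPerm (1 : Equiv.Perm (Fin a)) τ) := by
    intro k
    obtain ⟨s, rfl⟩ := finSumFinEquiv.surjective k
    rcases s with i | i
    · right; rw [hl]; rfl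
    · left; rw [hr]; rfl
  rw [hmul, hdis.cycleType_mul]
  congr 1
  · refine cycleType_embed (fun i => finSumFinEquiv (Sum.inl i))
      (finSumFinEquiv.injective.comp Sum.inl_injective) σ _ (hl σ 1) ?_
    intro k hk
    obtain ⟨s, rfl⟩ := finSumFinEquiv.surjective k
    rcases s with i | i
    · exact absurd ⟨i, rfl⟩ hk
    · rw [hr]; rfl
  · refine cycleType_embed (fun i => finSumFinEquiv (Sum.inr i))
      (finSumFinEquiv.injective.comp Sum.inr_injective) τ _ (hr 1 τ) ?_
    intro k hk
    obtain ⟨s, rfl⟩ := finSumFinEquiv.surjective k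
    rcases s with i | i
    · rw [hl]; rfl
    · exact absurd ⟨i, rfl⟩ hk

theorem psumPerm_phi (L : ℕ) {a b : ℕ} (σ : Equiv.Perm (Fin a)) (τ : Equiv.Perm (Fin b)) :
    Phi L (psumPerm σ τ) = Phi L σ * Phi L τ := by
  unfold Phi
  rw [sum_mul_sum, ← sum_product']
  symm
  have hl : ∀ i, psumPerm σ τ (Fin.castAdd b i) = Fin.castAdd b (σ i) := by
    intro i
    simp [psumPerm, Equiv.permCongr_apply]
  have hr : ∀ i, psumPerm σ τ (Fin.natAdd a i) = Fin.natAdd a (τ i) := by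
    intro i
    simp [psumPerm, Equiv.permCongr_apply]
  refine sum_bij' (fun p _ => Fin.append p.1 p.2)
    (fun h _ => (fun i => h (Fin.castAdd b i), fun i => h (Fin.natAdd a i))) ?_ ?_ ?_ ?_ ?_
  · rintro ⟨f, g⟩ hh
    simp only [mem_product, mem_filter, mem_univ, true_and] at hh ⊢
    funext k
    refine Fin.addCases (fun i => ?_) (fun i => ?_) k
    · rw [Function.comp_apply, hl, Fin.append_left, Fin.append_left]
      exact congrFun hh.1 i
    · rw [Function.comp_apply, hr, Fin.append_right, Fin.append_right]
      exact congrFun hh.2 i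
  · intro h hh
    simp only [mem_product, mem_filter, mem_univ, true_and] at hh ⊢
    constructor
    · funext i
      have := congrFun hh (Fin.castAdd b i)
      rwa [Function.comp_apply, hl] at this
    · funext i
      have := congrFun hh (Fin.natAdd a i)
      rwa [Function.comp_apply, hr] at this
  · rintro ⟨f, g⟩ _
    simp
  · intro h _
    funext k
    refine Fin.addCases (fun i => ?_) (fun i => ?_) k
    · rw [Fin.append_left]
    · rw [Fin.append_right]
  · rintro ⟨f, g⟩ _
    rw [Fin.prod_univ_add]
    simp

theorem phi_rotate (L q : ℕ) (hq : 0 < q) : Phi L (finRotate q) = psum L q := by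
  obtain ⟨q, rfl⟩ : ∃ k, q = k + 1 := ⟨q - 1, by omega⟩
  have hconst : ∀ h : Fin (q + 1) → Fin L, h ∘ finRotate (q + 1) = h → ∀ k, h k = h 0 := by
    intro h hh k
    induction k using Fin.induction with
    | zero => rfl
    | succ i ih =>
      have := congrFun hh i.castSucc
      rw [Function.comp_apply, finRotate_succ_apply, Fin.coeSucc_eq_succ] at this
      rw [this, ih]
  unfold Phi psum
  symm
  refine sum_bij' (fun i _ => fun _ => i) (fun h _ => h 0) ?_ ?_ ?_ ?_ ?_
  · intro i _
    rw [mem_filter]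
    exact ⟨mem_univ _, rfl⟩
  · intro h _; exact mem_univ _
  · intro i _; rfl
  · intro h hh
    funext k
    exact (hconst h (mem_filter.1 hh).2 k).symm
  · intro i _
    simp

theorem exists_elem (n : ℕ) : ∃ x : Equiv.Perm (Fin n),
    (∀ c ∈ x.cycleType, c ∣ 2 ^ n) ∧ x.cycleType.Nodup ∧ n ≤ x.cycleType.sum + 1 ∧
    x.cycleType.prod = binProd n ∧
    ∀ L, n ≤ L → Good L (Del L * Phi L x) n (binProd n * L.factorial) := by
  induction n using bin_induction with
  | h0 =>
    refine ⟨1, by simp, by simp, by simp, ?_, ?_⟩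
    · rw [binProd, dif_pos rfl]; simp
    · intro L _
      have : Phi L (1 : Equiv.Perm (Fin 0)) = 1 := by
        unfold Phi
        simp
      rw [this, mul_one, binProd, dif_pos rfl, one_mul]
      exact good_base L
  | hs a m hm ih =>
    obtain ⟨τ, h1, h2, h3, h4, h5⟩ := ih
    refine ⟨psumPerm (finRotate (2 ^ a)) τ, ?_⟩
    have hgood : ∀ L, 2 ^ a + m ≤ L → Good L (Del L * Phi L (psumPerm (finRotate (2 ^ a)) τ))
        (2 ^ a + m) (binProd (2 ^ a + m) * L.factorial) := by
      intro L hL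
      have := good_step (h5 L (by omega)) hm (by omega)
      rw [psumPerm_phi, phi_rotate _ _ (by positivity), binProd_step a m hm]
      convert this using 1 <;> ring
    rw [psumPerm_cycleType]
    rcases Nat.eq_zero_or_pos a with rfl | ha
    · have hm0 : m = 0 := by simpa using hm
      subst hm0
      have e1 : (finRotate (2 ^ 0)).cycleType = 0 := by
        rw [Equiv.Perm.cycleType_eq_zero]
        exact Subsingleton.elim (α := Equiv.Perm (Fin 1)) _ _
      rw [e1, zero_add]
      refine ⟨fun c hc => (h1 c hc).trans (by simp), h2, ?_, ?_, hgood⟩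
      · simp
      · rw [h4, binProd_step 0 0 hm]; simp
    · have h2a : 2 ≤ 2 ^ a := by
        calc 2 = 2 ^ 1 := rfl
          _ ≤ 2 ^ a := Nat.pow_le_pow_right (by norm_num) ha
      rw [cycleType_finRotate_of_le h2a, Multiset.singleton_add]
      refine ⟨?_, ?_, ?_, ?_, hgood⟩
      · intro c hc
        rcases Multiset.mem_cons.1 hc with rfl | hc
        · exact pow_dvd_pow 2 (by have := Nat.lt_two_pow_self (n := a); omega)
        · exact (h1 c hc).trans (pow_dvd_pow 2 (by omega))
      · rw [Multiset.nodup_cons]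
        refine ⟨fun hc => ?_, h2⟩
        have := Equiv.Perm.le_card_support_of_mem_cycleType hc
        have h6 := card_le_univ τ.support
        rw [Fintype.card_fin] at h6
        omega
      · rw [Multiset.sum_cons]; omega
      · rw [Multiset.prod_cons, h4, binProd_step a m hm]

theorem centralizer_card_le {n : ℕ} (x : Equiv.Perm (Fin n)) (h2 : x.cycleType.Nodup)
    (h3 : n ≤ x.cycleType.sum + 1) :
    Nat.card (Subgroup.centralizer {x}) = x.cycleType.prod := by
  rw [Equiv.Perm.nat_card_centralizer, Fintype.card_fin]
  have e1 : (n - x.cycleType.sum).factorial = 1 := by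
    rw [Nat.factorial_eq_one]; omega
  rw [e1, one_mul, prod_eq_one, mul_one]
  intro c hc
  rw [Multiset.count_eq_one_of_mem h2 (Multiset.mem_toFinset.1 hc)]
  rfl
end Elem

section Assembly
open Finset

theorem norm_one_sum {L : ℕ} (α : Fin L →₀ ℕ) (hα : Function.Injective α) :
    (∑ w : Equiv.Perm (Fin L), if ∀ i, α (w i) = α i then (Equiv.Perm.sign w : ℤ) else 0) = 1 := by
  rw [sum_eq_single 1]
  · simp
  · intro w _ hw
    rw [if_neg]
    intro h
    apply hw
    ext i
    rw [hα (h i)]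
    rfl
  · simp

theorem good_irr (n : ℕ) (F : MvPolynomial (Fin n) ℤ) (K : ℕ) (hF : Good n F n (K * n.factorial)) :
    ∃ S : Finset (Equiv.Perm (Fin n) → ℂ), S.card = K ∧ ∀ χ ∈ S, χ ∈ IrrChar (Equiv.Perm (Fin n)) ∧
      ∃ α ∈ F.support, χ = (fun σ => ((chi α σ : ℤ) : ℂ)) ∨ χ = -(fun σ => ((chi α σ : ℤ) : ℂ)) := by
  classical
  have hdeg : ∀ α ∈ F.support, ∑ i, α i = Fintype.card (Fin n) + ∑ j : Fin n, (j : ℕ) := by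
    intro α hα
    rw [hF.deg α hα, Fintype.card_fin]
  have hex : ∀ α : Fin n →₀ ℕ, ∃ χ : Equiv.Perm (Fin n) → ℂ, α ∈ F.support →
      χ ∈ IrrChar (Equiv.Perm (Fin n)) ∧
      (χ = (fun σ => ((chi α σ : ℤ) : ℂ)) ∨ χ = -(fun σ => ((chi α σ : ℤ) : ℂ))) := by
    intro α
    by_cases hα : α ∈ F.support
    · have hinj := anti_inj hF.anti α (MvPolynomial.mem_support_iff.1 hα)
      obtain ⟨χ, h1, h2⟩ := virt_norm_one (chi_virt (ι := Fin n) α)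
        (by rw [chi_ip α α (hdeg α hα), norm_one_sum α hinj, Int.cast_one])
      refine ⟨χ, fun _ => ⟨h1, ?_⟩⟩
      rcases h2 with h2 | h2
      · left; exact h2.symm
      · right; rw [h2, neg_neg]
    · exact ⟨0, fun h => absurd h hα⟩
  choose f hf using hex
  have hfib : ∀ b ∈ F.support.image f, (F.support.filter (fun α => f α = b)).card ≤ n.factorial := by
    intro b hb
    obtain ⟨α, hα, rfl⟩ := mem_image.1 hb
    have hsub : F.support.filter (fun β => f β = f α) ⊆
        (univ : Finset (Equiv.Perm (Fin n))).image
          (fun w => Finsupp.equivFunOnFinite.symm (fun i => α (w i))) := by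
      intro β hβ
      rw [mem_filter] at hβ
      have hne : ip (fun σ : Equiv.Perm (Fin n) => ((chi α σ : ℤ) : ℂ))
          (fun σ => ((chi β σ : ℤ) : ℂ)) ≠ 0 := by
        have hone := irr_orth (hf α hα).1 (hf α hα).1
        rw [if_pos rfl] at hone
        have hipneg : ∀ u v : Equiv.Perm (Fin n) → ℂ, ip (-u) v = - ip u v := by
          intro u v; simp [ip]
        have hipneg' : ∀ u v : Equiv.Perm (Fin n) → ℂ, ip u (-v) = - ip u v := by
          intro u v; simp [ip]
        have ha := (hf α hα).2
        have hb := (hf β hβ.1).2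
        rw [hβ.2] at hb
        intro h0
        have : ip (f α) (f α) = 0 := by
          rcases ha with ha | ha <;> rcases hb with hb | hb
          · rw [← h0, ← ha, ← hb]
          · nth_rewrite 1 [ha]
            rw [hb, hipneg', h0, neg_zero]
          · nth_rewrite 1 [ha]
            rw [hb, hipneg, h0, neg_zero]
          · nth_rewrite 1 [ha]
            rw [hb, hipneg, hipneg', h0, neg_zero, neg_zero]
        rw [this] at hone
        exact zero_ne_one hone
      rw [chi_ip α β (hdeg β hβ.1)] at hne
      have hne' : (∑ w : Equiv.Perm (Fin n),
          if ∀ i, α (w i) = β i then (Equiv.Perm.sign w : ℤ) else 0) ≠ 0 := by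
        intro h; rw [h] at hne; exact hne Int.cast_zero
      obtain ⟨w, _, hw⟩ := exists_ne_zero_of_sum_ne_zero hne'
      rw [mem_image]
      refine ⟨w, mem_univ _, ?_⟩
      ext i
      by_cases hall : ∀ i, α (w i) = β i
      · exact hall i
      · rw [if_neg hall] at hw; exact absurd rfl hw
    calc _ ≤ _ := card_le_card hsub
      _ ≤ _ := card_image_le
      _ = _ := by rw [card_univ, Fintype.card_perm, Fintype.card_fin]
  have hcard := card_le_mul_card_image (s := F.support) (f := f) n.factorial hfib
  have hK : K ≤ (F.support.image f).card := by
    have h1 := hF.card.trans hcard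
    rw [mul_comm] at h1
    exact Nat.le_of_mul_le_mul_left h1 (Nat.factorial_pos n)
  obtain ⟨S, hS, hSc⟩ := exists_subset_card_eq hK
  refine ⟨S, hSc, fun χ hχ => ?_⟩
  obtain ⟨α, hα, rfl⟩ := mem_image.1 (hS hχ)
  exact ⟨(hf α hα).1, α, hα, (hf α hα).2⟩

theorem odd_count (n : ℕ) :
    {χ ∈ IrrChar (Equiv.Perm (Fin n)) | ∃ m : ℕ, χ 1 = (m : ℂ) ∧ ¬ 2 ∣ m}.ncard = binProd n := by
  classical
  obtain ⟨x, h1, h2, h3, h4, h5⟩ := exists_elem n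
  have hG := h5 n le_rfl
  obtain ⟨S, hSc, hS⟩ := good_irr n _ _ hG
  have hxp : x ^ (2 ^ n) = 1 := by
    rw [← orderOf_dvd_iff_pow_eq_one, ← Equiv.Perm.lcm_cycleType]
    exact Multiset.lcm_dvd.2 h1
  have hintZ : ∀ χ ∈ S, ∀ g, ∃ m : ℤ, χ g = m := by
    intro χ hχ g
    obtain ⟨_, α, _, h | h⟩ := hS χ hχ
    · exact ⟨chi α g, by rw [h]⟩
    · exact ⟨-chi α g, by rw [h]; simp⟩
  have hval : ∀ χ ∈ S, χ x = ((1 : ℤ) : ℂ) ∨ χ x = ((-1 : ℤ) : ℂ) := by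
    intro χ hχ
    obtain ⟨_, α, hα, h⟩ := hS χ hχ
    have hu : chi α x = 1 ∨ chi α x = -1 := hG.unit α hα
    rcases h with h | h <;> rcases hu with hu | hu <;> simp [h, hu]
  have hvan := vanish x (fun g => by
      rw [Equiv.Perm.isConj_iff_cycleType_eq, Equiv.Perm.cycleType_inv]) S
    (fun χ hχ => (hS χ hχ).1) hintZ
    (fun χ hχ => by rcases hval χ hχ with h | h <;> simp [h])
    (by rw [centralizer_card_le x h2 h3, h4, hSc])
  have hset : {χ ∈ IrrChar (Equiv.Perm (Fin n)) | ∃ m : ℕ, χ 1 = (m : ℂ) ∧ ¬ 2 ∣ m} = ↑S := by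
    ext χ
    constructor
    · rintro ⟨hχ, m, hm, hodd⟩
      by_contra hns
      have h0 := hvan χ hχ hns
      obtain ⟨V, _, rfl⟩ := hχ
      have hp := char_parity V x n hxp 0 (by simpa using h0)
      rw [FDRep.char_one] at hm
      have hm' : Module.finrank ℂ V = m := by exact_mod_cast hm
      rw [hm'] at hp
      omega
    · intro hχ
      have hirr := (hS χ hχ).1
      refine ⟨hirr, ?_⟩
      have hv := hval χ hχ
      obtain ⟨V, _, rfl⟩ := hirr
      refine ⟨Module.finrank ℂ V, FDRep.char_one V, ?_⟩
      rcases hv with h | h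
      · have hp := char_parity V x n hxp _ h
        omega
      · have hp := char_parity V x n hxp _ h
        omega
  rw [hset, Set.ncard_coe_finset, hSc]
end Assembly

/-- For the symmetric group `Sₙ` with Sylow `2`-subgroup `P`, the number of irreducible complex
characters of odd degree equals `|P/P'|`, the index of the commutator subgroup of `P` in `P`. -/
theorem mckay_symmetric_p_two (n : ℕ) (hn : 0 < n) (P : Sylow 2 (Equiv.Perm (Fin n))) :
    {χ ∈ IrrChar (Equiv.Perm (Fin n)) | ∃ m : ℕ, χ 1 = (m : ℂ) ∧ ¬ 2 ∣ m}.ncard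
      = (commutator ↥(P : Subgroup (Equiv.Perm (Fin n)))).index := by
  rw [odd_count, sylow_index]
end
end
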